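/- Let P_{XY} be a probability distribution on a finite set X×Y, let Φ_{Y^n} be the uniform mixture over type classes of Y^n, and let g: ℕ → ℝ be a sub-exponential function (i.e., lim_{n→∞} (1/n) log₂ g(n) = 0) satisfying g(n) > (n+1)^{|Y|}. For fixed r ∈ ℝ, define p_n := P_{XY}^{×n}( {(x^n,y^n) : P_{XY}^{×n}(x^n,y^n) ≥ g(n)·2^{nr}·P_X^{×n}(x^n)·Φ_{Y^n}(y^n)} ). Then lim_{n→∞} (−1/n) log₂ p_n = sup_{t≥0} t(r − I_{1+t}(X:Y)_{P_{XY}}) (with the limit equal to ∞ when r ≥ I_∞(X:Y)_{P_{XY}}). -/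

import Mathlib

open scoped ENNReal NNReal BigOperators Classical
open Filter

noncomputable section

namespace RST

/-- Base-2 logarithm `ℝ≥0∞ → EReal`, with `log 0 = ⊥` and `log ⊤ = ⊤`. -/
def elog2 (s : ℝ≥0∞) : EReal :=
  if s = 0 then ⊥ else if s = ⊤ then ⊤ else ((Real.logb 2 s.toReal : ℝ) : EReal)

/-- Base-2 logarithm `EReal → EReal` (for nonnegative arguments). -/
def eLog2 (x : EReal) : EReal :=
  if x = ⊤ then ⊤ else if x ≤ 0 then ⊥ else ((Real.logb 2 x.toReal : ℝ) : EReal)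

/-- Base-2 exponential `EReal → ℝ≥0∞`. -/
def epow2 (x : EReal) : ℝ≥0∞ :=
  if x = ⊤ then ⊤ else if x = ⊥ then 0 else ENNReal.ofReal ((2 : ℝ) ^ x.toReal)

variable {X Y : Type*}

/-- A probability distribution on a finite alphabet, as an `ℝ≥0∞`-valued function. -/
def IsDist [Fintype X] (P : X → ℝ≥0∞) : Prop := ∑ x, P x = 1

/-- A discrete memoryless channel: every row is a probability distribution. -/
def IsChannel [Fintype X] [Fintype Y] (W : X → Y → ℝ≥0∞) : Prop := ∀ x, ∑ y, W x y = 1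

/-- Order-`α` Rényi divergence (base 2), with the order `α ∈ [0,∞]` encoded as `ℝ≥0∞`.
The conventions `0/0 = 0` and `a/0 = ∞` (for `a > 0`, `α > 1`) are built into `ℝ≥0∞`
arithmetic.  The second argument is allowed to be an arbitrary nonnegative vector. -/
def renyiD [Fintype X] (α : ℝ≥0∞) (P Q : X → ℝ≥0∞) : EReal :=
  if α = 0 then - elog2 (∑ x ∈ Finset.univ.filter fun x => P x ≠ 0, Q x)
  else if α = 1 then ∑ x, ((P x).toReal : EReal) * elog2 (P x / Q x)
  else if α = ⊤ then elog2 (⨆ x, P x / Q x)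
  else (((α.toReal - 1)⁻¹ : ℝ) : EReal) *
    elog2 (∑ x, P x ^ α.toReal * Q x ^ (1 - α.toReal))

/-- The `X`-marginal of a joint distribution on `X × Y`. -/
def margX [Fintype X] [Fintype Y] (P : X × Y → ℝ≥0∞) : X → ℝ≥0∞ := fun x => ∑ y, P (x, y)

/-- Order-`α` Rényi mutual information `I_α(X:Y)_P = min_{Q_Y} D_α(P‖P_X × Q_Y)`. -/
def renyiMI [Fintype X] [Fintype Y] (α : ℝ≥0∞) (P : X × Y → ℝ≥0∞) : EReal :=
  ⨅ Q : {Q : Y → ℝ≥0∞ // IsDist Q}, renyiD α P fun p => margX P p.1 * Q.1 p.2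

/-- The joint input-output distribution `P_X · W`. -/
def joint [Fintype X] [Fintype Y] (PX : X → ℝ≥0∞) (W : X → Y → ℝ≥0∞) : X × Y → ℝ≥0∞ :=
  fun p => PX p.1 * W p.1 p.2

/-- Order-`α` Rényi capacity `I_α(W) = max_{P_X} I_α(X:Y)_{P_X · W}`. -/
def renyiCap [Fintype X] [Fintype Y] (α : ℝ≥0∞) (W : X → Y → ℝ≥0∞) : EReal :=
  ⨆ P : {P : X → ℝ≥0∞ // IsDist P}, renyiMI α (joint P.1 W)

/-- `N` is a simulation of a channel `X → Y` with communication cost at most `c` bits: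
shared randomness `K = Fin m` with distribution `PK`, a message set `{1,…,M}` with
`log₂ M ≤ c`, an encoder `E` and a decoder `D`. -/
def IsSimulation [Fintype X] [Fintype Y] (c : ℝ) (N : X → Y → ℝ≥0∞) : Prop :=
  ∃ (m M : ℕ) (PK : Fin m → ℝ≥0∞) (E : X → Fin m → Fin M → ℝ≥0∞)
    (D : Fin M → Fin m → Y → ℝ≥0∞),
    0 < M ∧ Real.logb 2 M ≤ c ∧ (∑ k, PK k = 1) ∧
    (∀ x k, ∑ j, E x k j = 1) ∧ (∀ j k, ∑ y, D j k y = 1) ∧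
    ∀ x y, N x y = ∑ k, ∑ j, PK k * E x k j * D j k y

/-- `D_α(W, N) := max_x D_α(W(·|x) ‖ N(·|x))`. -/
def chD [Fintype X] [Fintype Y] (α : ℝ≥0∞) (W N : X → Y → ℝ≥0∞) : EReal :=
  ⨆ x, renyiD α (W x) (N x)

/-- `𝖣_α(W, c) := min_{N ∈ A(W,c)} D_α(W, N)`. -/
def simD [Fintype X] [Fintype Y] (α : ℝ≥0∞) (W : X → Y → ℝ≥0∞) (c : ℝ) : EReal :=
  ⨅ N : {N : X → Y → ℝ≥0∞ // IsSimulation c N}, chD α W N.1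

/-- The `n`-fold memoryless extension `W^{×n}` of a channel `W`. -/
def prodCh [Fintype X] [Fintype Y] (n : ℕ) (W : X → Y → ℝ≥0∞) :
    (Fin n → X) → (Fin n → Y) → ℝ≥0∞ :=
  fun xs ys => ∏ i, W (xs i) (ys i)

/-- A sequence of communication costs with rate at most `r`. -/
def RateOK (r : ℝ) (c : ℕ → ℝ) : Prop :=
  (∀ n, 0 ≤ c n) ∧ Filter.limsup (fun n : ℕ => ((c n / n : ℝ) : EReal)) Filter.atTop ≤ (r : EReal)

/-- Reliability function `E_rf^{(α)}(W, r)`. -/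
def Erf [Fintype X] [Fintype Y] (α : ℝ≥0∞) (W : X → Y → ℝ≥0∞) (r : ℝ) : EReal :=
  ⨆ c : {c : ℕ → ℝ // RateOK r c},
    Filter.liminf
      (fun n : ℕ => (((-1 : ℝ) / n : ℝ) : EReal) * eLog2 (simD α (prodCh n W) (c.1 n)))
      Filter.atTop

/-- Strong converse exponent `E_sc^{(α)}(W, r)`. -/
def Esc [Fintype X] [Fintype Y] (α : ℝ≥0∞) (W : X → Y → ℝ≥0∞) (r : ℝ) : EReal :=
  ⨅ c : {c : ℕ → ℝ // RateOK r c},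
    Filter.limsup
      (fun n : ℕ => (((1 : ℝ) / n : ℝ) : EReal) * simD α (prodCh n W) (c.1 n))
      Filter.atTop

/-- The `α`-Rényi simulation rate `R_RST^{(α)}(W)`. -/
def Rrst [Fintype X] [Fintype Y] (α : ℝ≥0∞) (W : X → Y → ℝ≥0∞) : EReal :=
  ⨅ c : {c : ℕ → ℝ // (∀ n, 0 ≤ c n) ∧
      Filter.limsup (fun n : ℕ => simD α (prodCh n W) (c n)) Filter.atTop = 0},
    Filter.limsup (fun n : ℕ => ((c.1 n / n : ℝ) : EReal)) Filter.atTop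

/-- n-fold product of a joint distribution on `X × Y`, as a distribution on pairs of
sequences. -/
def prodJoint [Fintype X] [Fintype Y] (n : ℕ) (P : X × Y → ℝ≥0∞) :
    (Fin n → X) × (Fin n → Y) → ℝ≥0∞ :=
  fun p => ∏ i, P (p.1 i, p.2 i)

/-- n-fold product distribution. -/
def prodDist [Fintype X] (n : ℕ) (P : X → ℝ≥0∞) : (Fin n → X) → ℝ≥0∞ :=
  fun xs => ∏ i, P (xs i)

/-- The type (empirical count vector) of a sequence. -/
def seqType [Fintype Y] [DecidableEq Y] {n : ℕ} (ys : Fin n → Y) : Y → ℕ :=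
  fun y => (Finset.univ.filter fun i => ys i = y).card

/-- The cardinality of the type class of a sequence. -/
def typeClassCard [Fintype Y] [DecidableEq Y] {n : ℕ} (ys : Fin n → Y) : ℕ :=
  (Finset.univ.filter fun zs : Fin n → Y => seqType zs = seqType ys).card

/-- The number of types of sequences in `Y^n`. -/
def numTypes (Y : Type*) [Fintype Y] [DecidableEq Y] (n : ℕ) : ℕ :=
  (Finset.univ.image fun ys : Fin n → Y => seqType ys).card

/-- `Φ_{Y^n}`: the uniform mixture over type classes of `Y^n`. -/
def PhiY (Y : Type*) [Fintype Y] [DecidableEq Y] (n : ℕ) : (Fin n → Y) → ℝ≥0∞ :=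
  fun ys => ((numTypes Y n : ℝ≥0∞) * (typeClassCard ys : ℝ≥0∞))⁻¹

end RST

/-! The mixture `Φ` of type classes dominates every i.i.d. law `Q ^ n` up to the polynomial factor
`(n + 1) ^ |Y|`. On the event the likelihood ratio of `P ^ n` to `P_X ^ n × Q ^ n` is therefore at
least `2 ^ (n r)` for every `Q`, and Markov's inequality for its `t`-th power bounds the probability
by `2 ^ (-n t (r - I_{1+t}))`. When `r ≥ I_∞` the optimal `Q` of order `∞` shows that the event is
null.

For the matching lower bound let `ℓ` be the log-ratio of `P` to its `X`-marginal and `q` Sibson's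
optimal output law of order `1 + t`, and change measure to the tilting `V` of `P` whose `Y`-marginal
is `q`. A distribution of mass at most one exceeds `e ^ (n δ) q ^ n` only on a set of exponentially
small `V`-mass, so the event is `V`-typical as soon as `r` is below the mean of `ℓ - log q` under
`V`. That mean is the derivative of `F t = t I_{1+t}`, and the cost `D(V‖P)` of the change of
measure is `t F' t - F t`; a minimiser of `F t - t r` makes it `t r - F t`, and it exists for
`r < I_∞` because `F` grows at rate `I_∞`. -/

namespace RST

open Topology

section Calculus

lemma deriv_nonneg_of_frequently_le {f : ℝ → ℝ} {f' x : ℝ} (hf : HasDerivAt f f' x)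
    (h : ∃ᶠ s in 𝓝[>] x, f x ≤ f s) : 0 ≤ f' := by
  have hslope : Tendsto (slope f x) (𝓝[>] x) (𝓝 f') :=
    (hasDerivWithinAt_iff_tendsto_slope' (Set.notMem_Ioi.2 le_rfl)).1 hf.hasDerivWithinAt
  refine ge_of_tendsto_of_frequently hslope ((h.and_eventually self_mem_nhdsWithin).mono ?_)
  rintro s ⟨hle, hs⟩
  rw [slope_def_field]
  exact div_nonneg (sub_nonneg.2 hle) (sub_nonneg.2 (le_of_lt hs))

lemma eventually_lt_of_deriv_neg {f : ℝ → ℝ} {f' x : ℝ} (hf : HasDerivAt f f' x)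
    (hneg : f' < 0) : ∀ᶠ s in 𝓝[>] x, f s < f x := by
  by_contra h
  refine hneg.not_ge (deriv_nonneg_of_frequently_le hf ?_)
  simpa only [not_eventually, not_lt] using h

-- Minimising `F s - s * R + η / (1 + s)` rather than `F s - s * R` makes the inequality
-- `R < F' t` strict at the minimiser, at the cost of the slack `η`.
lemma exists_lt_deriv_and_mul_sub_le {F F' : ℝ → ℝ} {C J R η : ℝ}
    (hF : ∀ t, 0 ≤ t → HasDerivAt F (F' t) t) (hgrowth : ∀ t, 0 ≤ t → C + t * J ≤ F t)
    (hRJ : R < J) (hη : 0 < η) : ∃ t, 0 ≤ t ∧ R < F' t ∧ t * (F' t - R) ≤ η := by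
  let H : ℝ → ℝ := fun s => F s - s * R + η / (1 + s)
  have hH : ∀ t, 0 ≤ t → HasDerivAt H (F' t - R - η / (1 + t) ^ 2) t := fun t ht => by
    have hinv := (((hasDerivAt_id t).const_add 1).inv (by simp only [id]; positivity)).const_mul η
    refine (((hF t ht).sub ((hasDerivAt_id t).mul_const R)).add hinv).congr_deriv ?_
    simp only [id]
    ring
  obtain ⟨T, hT⟩ : ∃ T, C + T * (J - R) = H 0 :=
    ⟨(H 0 - C) / (J - R), by field_simp [(sub_pos.2 hRJ).ne']; ring⟩
  have hT0 : 0 ≤ T := by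
    have h0 := hgrowth 0 le_rfl
    refine nonneg_of_mul_nonneg_left (b := J - R) ?_ (sub_pos.2 hRJ)
    simp only [H, add_zero, div_one, zero_mul] at hT h0
    linarith
  have hHT : H 0 < H T := by
    have hslack : 0 < η / (1 + T) := by positivity
    have := hgrowth T hT0
    rw [← hT]
    simp only [H]
    linarith
  obtain ⟨t, ⟨ht0, htT⟩, hmin⟩ := isCompact_Icc.exists_isMinOn (Set.nonempty_Icc.2 hT0)
    fun t ht => (hH t ht.1).continuousAt.continuousWithinAt
  have htT : t < T := htT.lt_of_ne fun h => (hmin ⟨le_rfl, hT0⟩).not_gt (h ▸ hHT)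
  have hslack : 0 < η / (1 + t) ^ 2 := by positivity
  have hnonneg : 0 ≤ F' t - R - η / (1 + t) ^ 2 :=
    deriv_nonneg_of_frequently_le (hH t ht0) <| Eventually.frequently <| by
      filter_upwards [Ioo_mem_nhdsGT htT] with s hs using hmin ⟨ht0.trans hs.1.le, hs.2.le⟩
  refine ⟨t, ht0, by linarith, ?_⟩
  rcases ht0.eq_or_lt with rfl | htpos
  · simpa using hη.le
  have hzero : F' t - R - η / (1 + t) ^ 2 = 0 :=
    (hmin.isLocalMin (Icc_mem_nhds htpos htT)).hasDerivAt_eq_zero (hH t ht0)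
  rw [sub_eq_zero.1 hzero, mul_div_assoc', div_le_iff₀ (by positivity)]
  nlinarith [mul_pos hη htpos, mul_pos hη (pow_pos htpos 2)]

end Calculus

section ProductMeasures

variable {α : Type*} [Fintype α]

lemma sum_filter_le_add {f : α → ℝ} (hf : ∀ a, 0 ≤ f a) {p q r : α → Prop}
    [DecidablePred p] [DecidablePred q] [DecidablePred r] (h : ∀ a, f a ≠ 0 → p a → q a ∨ r a) :
    ∑ a with p a, f a ≤ ∑ a with q a, f a + ∑ a with r a, f a := by
  simp only [Finset.sum_filter, ← Finset.sum_add_distrib]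
  refine Finset.sum_le_sum fun a _ => ?_
  have := hf a
  have := h a
  split_ifs <;> grind

lemma sum_filter_mul_le_le_inv {f Φ : α → ℝ} {K : ℝ} (hK : 0 < K) (hΦ : ∀ a, 0 ≤ Φ a)
    (hΦsum : ∑ a, Φ a ≤ 1) : ∑ a with K * f a ≤ Φ a, f a ≤ K⁻¹ :=
  calc ∑ a with K * f a ≤ Φ a, f a ≤ ∑ a with K * f a ≤ Φ a, K⁻¹ * Φ a :=
        Finset.sum_le_sum fun a ha => (le_inv_mul_iff₀ hK).2 (Finset.mem_filter.1 ha).2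
    _ ≤ ∑ a, K⁻¹ * Φ a := Finset.sum_le_sum_of_subset_of_nonneg (Finset.filter_subset _ _)
        fun a _ _ => mul_nonneg (inv_nonneg.2 hK.le) (hΦ a)
    _ ≤ K⁻¹ := by
        rw [← Finset.mul_sum]
        exact mul_le_of_le_one_right (inv_nonneg.2 hK.le) hΦsum

lemma sum_prod_filter_le_pow {V h : α → ℝ} (hV : ∀ a, 0 ≤ V a) {s : ℝ} (hs : 0 ≤ s) (c : ℝ)
    (n : ℕ) : ∑ w : Fin n → α with n * c ≤ ∑ i, h (w i), ∏ i, V (w i)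
      ≤ (∑ a, V a * Real.exp (s * (h a - c))) ^ n := by
  have hterm : ∀ w : Fin n → α, 0 ≤ ∏ i, V (w i) := fun w => Finset.prod_nonneg fun i _ => hV _
  have hexp : ∀ w : Fin n → α, ∏ i, (V (w i) * Real.exp (s * (h (w i) - c)))
      = (∏ i, V (w i)) * Real.exp (s * (∑ i, h (w i) - n * c)) := fun w => by
    rw [Finset.prod_mul_distrib, ← Real.exp_sum, ← Finset.mul_sum, Finset.sum_sub_distrib,
      Finset.sum_const, Finset.card_univ, Fintype.card_fin, nsmul_eq_mul]
  rw [Fintype.sum_pow]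
  calc _ ≤ ∑ w : Fin n → α with n * c ≤ ∑ i, h (w i),
          ∏ i, (V (w i) * Real.exp (s * (h (w i) - c))) := Finset.sum_le_sum fun w hw => by
        rw [hexp]
        refine le_mul_of_one_le_right (hterm w) (Real.one_le_exp (mul_nonneg hs ?_))
        exact sub_nonneg.2 (Finset.mem_filter.1 hw).2
    _ ≤ _ := Finset.sum_le_sum_of_subset_of_nonneg (Finset.filter_subset _ _) fun w _ _ =>
        hexp w ▸ mul_nonneg (hterm w) (Real.exp_nonneg _)

lemma exists_pos_sum_mul_exp_lt_one {V h : α → ℝ} (hsum : ∑ a, V a = 1) {c : ℝ}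
    (hc : ∑ a, V a * h a < c) : ∃ s, 0 < s ∧ ∑ a, V a * Real.exp (s * (h a - c)) < 1 := by
  have hderiv : HasDerivAt (fun s => ∑ a, V a * Real.exp (s * (h a - c)))
      (∑ a, V a * (h a - c)) 0 := by
    refine HasDerivAt.fun_sum fun a _ => ?_
    simpa using (((hasDerivAt_id (0 : ℝ)).mul_const (h a - c)).exp).const_mul (V a)
  have hneg : ∑ a, V a * (h a - c) < 0 := by
    simp only [mul_sub, Finset.sum_sub_distrib, ← Finset.sum_mul, hsum, one_mul]
    exact sub_neg.2 hc
  obtain ⟨s, hlt, hs⟩ :=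
    ((eventually_lt_of_deriv_neg hderiv hneg).and self_mem_nhdsWithin).exists
  exact ⟨s, hs, by simpa [hsum] using hlt⟩

lemma tendsto_sum_prod_filter_zero {V h : α → ℝ} (hV : ∀ a, 0 ≤ V a) (hsum : ∑ a, V a = 1)
    {c : ℝ} (hc : ∑ a, V a * h a < c) :
    Tendsto (fun n : ℕ => ∑ w : Fin n → α with n * c ≤ ∑ i, h (w i), ∏ i, V (w i))
      atTop (𝓝 0) := by
  obtain ⟨s, hs, hlt⟩ := exists_pos_sum_mul_exp_lt_one hsum hc
  have hmgf : 0 ≤ ∑ a, V a * Real.exp (s * (h a - c)) :=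
    Finset.sum_nonneg fun a _ => mul_nonneg (hV a) (Real.exp_nonneg _)
  exact squeeze_zero (fun n => Finset.sum_nonneg fun w _ => Finset.prod_nonneg fun i _ => hV _)
    (sum_prod_filter_le_pow hV hs.le c) (tendsto_pow_atTop_nhds_zero_of_lt_one hmgf hlt)

lemma prod_eq_exp_sum_log {ι : Type*} [Fintype ι] {f : ι → ℝ} (hf : ∀ i, 0 < f i) :
    ∏ i, f i = Real.exp (∑ i, Real.log (f i)) := by
  simp only [Real.exp_sum, Real.exp_log (hf _)]

lemma sum_prod_filter_le_add_exp_mul {p V : α → ℝ} (hp : ∀ a, 0 ≤ p a) (hV : ∀ a, 0 ≤ V a)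
    (hpV : ∀ a, p a = 0 → V a = 0) {n : ℕ} (E : (Fin n → α) → Prop)
    [DecidablePred E] (c : ℝ) :
    ∑ w with E w, ∏ i, V (w i) ≤
      ∑ w : Fin n → α with n * c ≤ ∑ i, Real.log (V (w i) / p (w i)), ∏ i, V (w i) +
        Real.exp (n * c) * ∑ w with E w, ∏ i, p (w i) := by
  have hVn : ∀ w : Fin n → α, 0 ≤ ∏ i, V (w i) := fun w => Finset.prod_nonneg fun i _ => hV _
  have hpn : ∀ w : Fin n → α, 0 ≤ Real.exp (n * c) * ∏ i, p (w i) := fun w =>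
    mul_nonneg (Real.exp_nonneg _) (Finset.prod_nonneg fun i _ => hp _)
  have htyp : ∀ w : Fin n → α, ∑ i, Real.log (V (w i) / p (w i)) < n * c →
      ∏ i, V (w i) ≤ Real.exp (n * c) * ∏ i, p (w i) := fun w hw => by
    by_cases h0 : ∏ i, V (w i) = 0
    · exact h0 ▸ hpn w
    have hVpos : ∀ i, 0 < V (w i) := fun i =>
      (hV _).lt_of_ne' (Finset.prod_ne_zero_iff.1 h0 i (Finset.mem_univ i))
    have hppos : ∀ i, 0 < p (w i) := fun i => (hp _).lt_of_ne' fun h => (hVpos i).ne' (hpV _ h)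
    rw [← div_le_iff₀ (Finset.prod_pos fun i _ => hppos i), ← Finset.prod_div_distrib,
      prod_eq_exp_sum_log fun i => div_pos (hVpos i) (hppos i)]
    exact Real.exp_le_exp.2 hw.le
  simp only [Finset.mul_sum, Finset.sum_filter, ← Finset.sum_add_distrib]
  refine Finset.sum_le_sum fun w _ => ?_
  have := hVn w
  have := hpn w
  have := htyp w
  split_ifs <;> grind

lemma eventually_exp_le_sum_prod {p V : α → ℝ} (hp : ∀ a, 0 ≤ p a) (hV : ∀ a, 0 ≤ V a)
    (hsum : ∑ a, V a = 1) (hpV : ∀ a, p a = 0 → V a = 0) {E : ∀ n : ℕ, (Fin n → α) → Prop}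
    [∀ n, DecidablePred (E n)]
    (hE : Tendsto (fun n => ∑ w with ¬E n w, ∏ i, V (w i)) atTop (𝓝 0)) {D : ℝ}
    (hD : ∑ a, V a * Real.log (V a / p a) < D) :
    ∀ᶠ n : ℕ in atTop, Real.exp (-(n * D)) ≤ ∑ w with E n w, ∏ i, p (w i) := by
  obtain ⟨D', hDD', hD'D⟩ := exists_between hD
  have hatyp := tendsto_sum_prod_filter_zero hV hsum hDD'
  have hslack : Tendsto (fun n : ℕ => Real.exp (-(n * (D - D')))) atTop (𝓝 0) :=
    Real.tendsto_exp_neg_atTop_nhds_zero.comp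
      (tendsto_natCast_atTop_atTop.atTop_mul_const (sub_pos.2 hD'D))
  have hsmall := (hE.add hatyp).add hslack
  rw [add_zero, add_zero] at hsmall
  filter_upwards [hsmall.eventually_le_const one_pos] with n hn
  have htotal : ∑ w with E n w, ∏ i, V (w i) + ∑ w with ¬E n w, ∏ i, V (w i) = 1 := by
    rw [Finset.sum_filter_add_sum_filter_not, ← Fintype.sum_pow, hsum, one_pow]
  have hchange := sum_prod_filter_le_add_exp_mul hp hV hpV (E n) D'
  have hexp : Real.exp (-(n * (D - D'))) = Real.exp (n * D') * Real.exp (-(n * D)) := by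
    rw [← Real.exp_add]
    ring_nf
  refine le_of_mul_le_mul_left ?_ (Real.exp_pos (n * D'))
  linarith

end ProductMeasures

section Marginals

variable {X Y : Type*} [Fintype X]

/-- The `Y`-marginal of a real-valued joint mass function on `X × Y`. -/
def margY (V : X × Y → ℝ) (y : Y) : ℝ := ∑ x, V (x, y)

lemma le_margY {V : X × Y → ℝ} (hV : ∀ z, 0 ≤ V z) (z : X × Y) : V z ≤ margY V z.2 :=
  Finset.single_le_sum (f := fun x => V (x, z.2)) (fun _ _ => hV _) (Finset.mem_univ z.1)

lemma sum_prod_filter_snd [Fintype Y] (V : X × Y → ℝ) {n : ℕ} (E : (Fin n → Y) → Prop)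
    [DecidablePred E] :
    ∑ z : Fin n → X × Y with E (Prod.snd ∘ z), ∏ i, V (z i) =
      ∑ y with E y, ∏ i, margY V (y i) := by
  simp only [Finset.sum_filter, margY, Fintype.prod_sum]
  rw [← (Equiv.arrowProdEquivProdArrow (Fin n) (fun _ => X) (fun _ => Y)).symm.sum_comp,
    Fintype.sum_prod_type_right]
  refine Finset.sum_congr rfl fun y _ => ?_
  change ∑ x : Fin n → X, (if E y then ∏ i, V (x i, y i) else 0) = _
  split_ifs
  · rfl
  · exact Finset.sum_const_zero

lemma mul_exp_mul_le_exp_sum {V ℓ : X × Y → ℝ} (hV : ∀ z, 0 ≤ V z) {n : ℕ} {z : Fin n → X × Y}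
    (hz : ∏ i, V (z i) ≠ 0) {a φ δ R : ℝ} (ha : a ≤ Real.exp (n * δ)) (hφ : 0 ≤ φ)
    (hφlt : φ < Real.exp (n * δ) * ∏ i, margY V (z i).2)
    (htyp : ∑ i, (Real.log (margY V (z i).2) - ℓ (z i)) < n * -(R + (δ + δ))) :
    a * Real.exp (n * R) * φ ≤ Real.exp (∑ i, ℓ (z i)) := by
  have hpos : ∀ i, 0 < margY V (z i).2 := fun i => (le_margY hV (z i)).trans_lt' <|
    (hV _).lt_of_ne' (Finset.prod_ne_zero_iff.1 hz i (Finset.mem_univ i))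
  rw [Finset.sum_sub_distrib] at htyp
  rw [prod_eq_exp_sum_log hpos, ← Real.exp_add] at hφlt
  calc a * Real.exp (n * R) * φ
      ≤ Real.exp (n * δ) * Real.exp (n * R) *
          Real.exp (n * δ + ∑ i, Real.log (margY V (z i).2)) := by gcongr
    _ = Real.exp (n * (R + (δ + δ)) + ∑ i, Real.log (margY V (z i).2)) := by
        rw [← Real.exp_add, ← Real.exp_add]
        ring_nf
    _ ≤ Real.exp (∑ i, ℓ (z i)) := Real.exp_le_exp.2 (by linarith)

-- `∑ i, ℓ (z i) = n * M + o(n) + ∑ i, log (margY V (z i).2)` for typical `z`, where `M` is the mean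
-- in `hR`, while `Φ n` exceeds the product measure of the marginal only on a set of small mass.
lemma tendsto_sum_prod_filter_not_le_exp_sum [Fintype Y] {V ℓ : X × Y → ℝ} (hV : ∀ z, 0 ≤ V z)
    (hsum : ∑ z, V z = 1) {Φ : ∀ n : ℕ, (Fin n → Y) → ℝ} (hΦ : ∀ n y, 0 ≤ Φ n y)
    (hΦsum : ∀ n, ∑ y, Φ n y ≤ 1) {g : ℕ → ℝ}
    (hg : ∀ δ > 0, ∀ᶠ n : ℕ in atTop, g n ≤ Real.exp (n * δ)) {R : ℝ}
    (hR : R < ∑ z, V z * (ℓ z - Real.log (margY V z.2))) :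
    Tendsto (fun n : ℕ => ∑ z : Fin n → X × Y with
        ¬g n * Real.exp (n * R) * Φ n (Prod.snd ∘ z) ≤ Real.exp (∑ i, ℓ (z i)), ∏ i, V (z i))
      atTop (𝓝 0) := by
  obtain ⟨R₁, hRR₁, hR₁⟩ := exists_between hR
  obtain ⟨δ, hδ, rfl⟩ : ∃ δ > 0, R + (δ + δ) = R₁ := ⟨(R₁ - R) / 2, by linarith, by ring⟩
  have hatyp := tendsto_sum_prod_filter_zero (h := fun z => Real.log (margY V z.2) - ℓ z)
    (c := -(R + (δ + δ))) hV hsum <| by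
      simpa only [← neg_sub (ℓ _), mul_neg, Finset.sum_neg_distrib, neg_lt_neg_iff]
  have hinv : Tendsto (fun n : ℕ => (Real.exp (n * δ))⁻¹) atTop (𝓝 0) :=
    (Real.tendsto_exp_atTop.comp (tendsto_natCast_atTop_atTop.atTop_mul_const hδ)).inv_tendsto_atTop
  have hVn : ∀ {n : ℕ} (z : Fin n → X × Y), 0 ≤ ∏ i, V (z i) := fun z =>
    Finset.prod_nonneg fun i _ => hV _
  refine tendsto_of_tendsto_of_tendsto_of_le_of_le' tendsto_const_nhds
    (by simpa only [add_zero] using hatyp.add hinv)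
    (.of_forall fun n => Finset.sum_nonneg fun z _ => hVn z) ?_
  filter_upwards [hg δ hδ] with n hgn
  have hcover : ∀ z : Fin n → X × Y, ∏ i, V (z i) ≠ 0 →
      ¬g n * Real.exp (n * R) * Φ n (Prod.snd ∘ z) ≤ Real.exp (∑ i, ℓ (z i)) →
      n * -(R + (δ + δ)) ≤ ∑ i, (Real.log (margY V (z i).2) - ℓ (z i)) ∨
        Real.exp (n * δ) * ∏ i, margY V ((Prod.snd ∘ z) i) ≤ Φ n (Prod.snd ∘ z) := by
    intro z hz
    contrapose!
    exact fun h => mul_exp_mul_le_exp_sum hV hz hgn (hΦ n _) h.2 h.1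
  exact (sum_filter_le_add hVn hcover).trans <| add_le_add_right ((sum_prod_filter_snd V fun y =>
    Real.exp (n * δ) * ∏ i, margY V (y i) ≤ Φ n y).trans_le
    (sum_filter_mul_le_le_inv (Real.exp_pos _) (hΦ n) (hΦsum n))) _

end Marginals

section Tilting

variable {X Y : Type*} [Fintype X]

/-- The mass `∑ x, p (x, y) e ^ (t ℓ (x, y))` of the fibre over `y` under the exponential tilting
of `p` by `t ℓ`. -/
def tiltedMass (p ℓ : X × Y → ℝ) (t : ℝ) (y : Y) : ℝ := ∑ x, p (x, y) * Real.exp (t * ℓ (x, y))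

lemma tiltedMass_nonneg {p : X × Y → ℝ} (hp : ∀ z, 0 ≤ p z) (ℓ : X × Y → ℝ) (t : ℝ) (y : Y) :
    0 ≤ tiltedMass p ℓ t y :=
  Finset.sum_nonneg fun _ _ => mul_nonneg (hp _) (Real.exp_nonneg _)

lemma mul_exp_le_tiltedMass {p : X × Y → ℝ} (hp : ∀ z, 0 ≤ p z) (ℓ : X × Y → ℝ) (t : ℝ) (x : X)
    (y : Y) : p (x, y) * Real.exp (t * ℓ (x, y)) ≤ tiltedMass p ℓ t y :=
  Finset.single_le_sum (f := fun x => p (x, y) * Real.exp (t * ℓ (x, y)))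
    (fun _ _ => mul_nonneg (hp _) (Real.exp_nonneg _)) (Finset.mem_univ x)

lemma tiltedMass_pos {p : X × Y → ℝ} (hp : ∀ z, 0 ≤ p z) (ℓ : X × Y → ℝ) (t : ℝ) {z : X × Y}
    (hz : p z ≠ 0) : 0 < tiltedMass p ℓ t z.2 :=
  (mul_exp_le_tiltedMass hp ℓ t z.1 z.2).trans_lt' <|
    mul_pos ((hp z).lt_of_ne' hz) (Real.exp_pos _)

lemma tiltedMass_eq_zero_iff {p : X × Y → ℝ} (hp : ∀ z, 0 ≤ p z) (ℓ : X × Y → ℝ) (t : ℝ) (y : Y) :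
    tiltedMass p ℓ t y = 0 ↔ ∀ x, p (x, y) = 0 := by
  simp [tiltedMass, Finset.sum_eq_zero_iff_of_nonneg
    fun x _ => mul_nonneg (hp (x, y)) (Real.exp_nonneg (t * ℓ (x, y)))]

lemma hasDerivAt_tiltedMass (p ℓ : X × Y → ℝ) (t : ℝ) (y : Y) :
    HasDerivAt (fun s => tiltedMass p ℓ s y) (tiltedMass (fun z => p z * ℓ z) ℓ t y) t := by
  refine HasDerivAt.fun_sum fun x _ => ?_
  refine ((((hasDerivAt_id t).mul_const (ℓ (x, y))).exp).const_mul (p (x, y))).congr_deriv ?_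
  simp only [id]
  ring

lemma hasDerivAt_tiltedMass_rpow {p : X × Y → ℝ} (hp : ∀ z, 0 ≤ p z) (ℓ : X × Y → ℝ) {t : ℝ}
    (ht : 0 ≤ t) (y : Y) :
    HasDerivAt (fun s => tiltedMass p ℓ s y ^ (1 + s)⁻¹)
      ((1 + t)⁻¹ * (tiltedMass p ℓ t y ^ (1 + t)⁻¹ *
        (tiltedMass (fun z => p z * ℓ z) ℓ t y / tiltedMass p ℓ t y -
          (1 + t)⁻¹ * Real.log (tiltedMass p ℓ t y)))) t := by
  have ht1 : 1 + t ≠ 0 := by positivity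
  rcases (tiltedMass_nonneg hp ℓ t y).eq_or_lt with h0 | hpos
  · have hzero : ∀ s, tiltedMass p ℓ s y = 0 := fun s =>
      (tiltedMass_eq_zero_iff hp ℓ s y).2 ((tiltedMass_eq_zero_iff hp ℓ t y).1 h0.symm)
    have hne : ∀ᶠ s in 𝓝 t, 1 + s ≠ 0 :=
      (continuous_const.add continuous_id).continuousAt.eventually_ne ht1
    rw [hzero, Real.zero_rpow (inv_ne_zero ht1), zero_mul, mul_zero]
    refine (hasDerivAt_const t (0 : ℝ)).congr_of_eventuallyEq (hne.mono fun s hs => ?_)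
    simp only [hzero, Real.zero_rpow (inv_ne_zero hs)]
  · have hinv := ((hasDerivAt_id t).const_add 1).inv ht1
    refine ((hasDerivAt_tiltedMass p ℓ t y).rpow hinv hpos).congr_deriv ?_
    simp only [Pi.inv_apply, id]
    rw [Real.rpow_sub_one hpos.ne']
    field_simp
    ring

variable [Fintype Y]

/-- Sibson's sum `∑ y, (∑ x, p (x, y) e ^ (t ℓ (x, y))) ^ (1 / (1 + t))`. -/
def sibsonSum (p ℓ : X × Y → ℝ) (t : ℝ) : ℝ := ∑ y, tiltedMass p ℓ t y ^ (1 + t)⁻¹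

/-- `(1 + t) log` of Sibson's sum. When `ℓ` is the log-ratio of the joint distribution `p` to its
`X`-marginal, this is `t` times the mutual information of order `1 + t`, in nats. -/
def sibsonLog (p ℓ : X × Y → ℝ) (t : ℝ) : ℝ := (1 + t) * Real.log (sibsonSum p ℓ t)

/-- Sibson's distribution on `Y`, which attains the minimum defining the mutual information of
order `1 + t`. -/
def sibsonOpt (p ℓ : X × Y → ℝ) (t : ℝ) (y : Y) : ℝ :=
  tiltedMass p ℓ t y ^ (1 + t)⁻¹ / sibsonSum p ℓ t

/-- The joint distribution with `Y`-marginal `sibsonOpt p ℓ t` whose conditional distribution of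
`X` given `Y` is the tilting of that of `p` by `t ℓ`. -/
def sibsonTilt (p ℓ : X × Y → ℝ) (t : ℝ) (z : X × Y) : ℝ :=
  p z * Real.exp (t * ℓ z) / tiltedMass p ℓ t z.2 * sibsonOpt p ℓ t z.2

/-- The mean of `ℓ z - log q(y)` under `sibsonTilt p ℓ t`, where `q = sibsonOpt p ℓ t`. -/
def sibsonMean (p ℓ : X × Y → ℝ) (t : ℝ) : ℝ :=
  ∑ z, sibsonTilt p ℓ t z * (ℓ z - Real.log (sibsonOpt p ℓ t z.2))

variable {p : X × Y → ℝ}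

lemma sibsonSum_pos (hp : ∀ z, 0 ≤ p z) (hp0 : p ≠ 0) (ℓ : X × Y → ℝ) (t : ℝ) :
    0 < sibsonSum p ℓ t := by
  obtain ⟨z, hz⟩ := Function.ne_iff.1 hp0
  exact Finset.sum_pos' (fun y _ => Real.rpow_nonneg (tiltedMass_nonneg hp ℓ t y) _)
    ⟨z.2, Finset.mem_univ _, Real.rpow_pos_of_pos (tiltedMass_pos hp ℓ t hz) _⟩

lemma sibsonOpt_nonneg (hp : ∀ z, 0 ≤ p z) (ℓ : X × Y → ℝ) (t : ℝ) (y : Y) :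
    0 ≤ sibsonOpt p ℓ t y :=
  div_nonneg (Real.rpow_nonneg (tiltedMass_nonneg hp ℓ t y) _)
    (Finset.sum_nonneg fun _ _ => Real.rpow_nonneg (tiltedMass_nonneg hp ℓ t _) _)

lemma sibsonOpt_pos (hp : ∀ z, 0 ≤ p z) (ℓ : X × Y → ℝ) (t : ℝ) {z : X × Y} (hz : p z ≠ 0) :
    0 < sibsonOpt p ℓ t z.2 :=
  div_pos (Real.rpow_pos_of_pos (tiltedMass_pos hp ℓ t hz) _)
    (sibsonSum_pos hp (fun h => hz (congrFun h z)) ℓ t)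

lemma sum_sibsonOpt (hp : ∀ z, 0 ≤ p z) (hp0 : p ≠ 0) (ℓ : X × Y → ℝ) (t : ℝ) :
    ∑ y, sibsonOpt p ℓ t y = 1 := by
  simp only [sibsonOpt, ← Finset.sum_div]
  exact div_self (sibsonSum_pos hp hp0 ℓ t).ne'

lemma sibsonTilt_nonneg (hp : ∀ z, 0 ≤ p z) (ℓ : X × Y → ℝ) (t : ℝ) (z : X × Y) :
    0 ≤ sibsonTilt p ℓ t z :=
  mul_nonneg (div_nonneg (mul_nonneg (hp z) (Real.exp_nonneg _)) (tiltedMass_nonneg hp ℓ t _))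
    (sibsonOpt_nonneg hp ℓ t _)

lemma margY_sibsonTilt (p ℓ : X × Y → ℝ) {t : ℝ} (ht : 0 ≤ t) (y : Y) :
    margY (sibsonTilt p ℓ t) y = sibsonOpt p ℓ t y := by
  simp only [margY, sibsonTilt, ← Finset.sum_mul, ← Finset.sum_div]
  change tiltedMass p ℓ t y / tiltedMass p ℓ t y * sibsonOpt p ℓ t y = _
  by_cases h0 : tiltedMass p ℓ t y = 0
  · rw [sibsonOpt, h0, Real.zero_rpow (by positivity), zero_div, zero_div, mul_zero]
  · rw [div_self h0, one_mul]

lemma sum_sibsonTilt (hp : ∀ z, 0 ≤ p z) (hp0 : p ≠ 0) (ℓ : X × Y → ℝ) {t : ℝ} (ht : 0 ≤ t) :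
    ∑ z, sibsonTilt p ℓ t z = 1 := by
  rw [Fintype.sum_prod_type_right, ← sum_sibsonOpt hp hp0 ℓ t]
  exact Finset.sum_congr rfl fun y _ => margY_sibsonTilt p ℓ ht y

lemma log_sibsonOpt (hp : ∀ z, 0 ≤ p z) (ℓ : X × Y → ℝ) (t : ℝ) {z : X × Y} (hz : p z ≠ 0) :
    Real.log (sibsonOpt p ℓ t z.2) =
      (1 + t)⁻¹ * Real.log (tiltedMass p ℓ t z.2) - Real.log (sibsonSum p ℓ t) := by
  have hpos := tiltedMass_pos hp ℓ t hz
  rw [sibsonOpt, Real.log_div (Real.rpow_pos_of_pos hpos _).ne'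
    (sibsonSum_pos hp (fun h => hz (congrFun h z)) ℓ t).ne', Real.log_rpow hpos]

lemma sum_sibsonTilt_mul_log_div (hp : ∀ z, 0 ≤ p z) (hp0 : p ≠ 0) (ℓ : X × Y → ℝ) {t : ℝ}
    (ht : 0 ≤ t) : ∑ z, sibsonTilt p ℓ t z * Real.log (sibsonTilt p ℓ t z / p z) =
      t * sibsonMean p ℓ t - sibsonLog p ℓ t := by
  have hterm : ∀ z, sibsonTilt p ℓ t z * Real.log (sibsonTilt p ℓ t z / p z) =
      t * (sibsonTilt p ℓ t z * (ℓ z - Real.log (sibsonOpt p ℓ t z.2))) -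
        sibsonLog p ℓ t * sibsonTilt p ℓ t z := fun z => by
    by_cases hz : p z = 0
    · simp [sibsonTilt, hz]
    have hmass := (tiltedMass_pos hp ℓ t hz).ne'
    have hratio : sibsonTilt p ℓ t z / p z =
        Real.exp (t * ℓ z) / tiltedMass p ℓ t z.2 * sibsonOpt p ℓ t z.2 := by
      rw [sibsonTilt]
      field_simp
    rw [hratio, Real.log_mul (div_ne_zero (Real.exp_ne_zero _) hmass) (sibsonOpt_pos hp ℓ t hz).ne',
      Real.log_div (Real.exp_ne_zero _) hmass, Real.log_exp, log_sibsonOpt hp ℓ t hz, sibsonLog]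
    field_simp
    ring
  rw [Finset.sum_congr rfl fun z _ => hterm z, Finset.sum_sub_distrib, ← Finset.mul_sum,
    ← Finset.mul_sum, sum_sibsonTilt hp hp0 ℓ ht, mul_one, sibsonMean]

lemma sibsonMean_eq (hp : ∀ z, 0 ≤ p z) (hp0 : p ≠ 0) (ℓ : X × Y → ℝ) {t : ℝ} (ht : 0 ≤ t) :
    sibsonMean p ℓ t = Real.log (sibsonSum p ℓ t) + ∑ y, sibsonOpt p ℓ t y *
      (tiltedMass (fun z => p z * ℓ z) ℓ t y / tiltedMass p ℓ t y -
        (1 + t)⁻¹ * Real.log (tiltedMass p ℓ t y)) := by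
  have hterm : ∀ z, sibsonTilt p ℓ t z * (ℓ z - Real.log (sibsonOpt p ℓ t z.2)) =
      p z * ℓ z * Real.exp (t * ℓ z) / tiltedMass p ℓ t z.2 * sibsonOpt p ℓ t z.2 -
        sibsonTilt p ℓ t z * ((1 + t)⁻¹ * Real.log (tiltedMass p ℓ t z.2)) +
        sibsonTilt p ℓ t z * Real.log (sibsonSum p ℓ t) := fun z => by
    by_cases hz : p z = 0
    · simp [sibsonTilt, hz]
    rw [log_sibsonOpt hp ℓ t hz, sibsonTilt]
    ring
  rw [sibsonMean, Finset.sum_congr rfl fun z _ => hterm z, Finset.sum_add_distrib, ← Finset.sum_mul,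
    sum_sibsonTilt hp hp0 ℓ ht, one_mul, add_comm, Fintype.sum_prod_type_right]
  refine congrArg _ (Finset.sum_congr rfl fun y _ => ?_)
  simp only [Finset.sum_sub_distrib, ← Finset.sum_mul, ← Finset.sum_div]
  change tiltedMass (fun z => p z * ℓ z) ℓ t y / _ * _ - margY (sibsonTilt p ℓ t) y * _ = _
  rw [margY_sibsonTilt p ℓ ht]
  ring

lemma hasDerivAt_sibsonLog (hp : ∀ z, 0 ≤ p z) (hp0 : p ≠ 0) (ℓ : X × Y → ℝ) {t : ℝ} (ht : 0 ≤ t) :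
    HasDerivAt (sibsonLog p ℓ) (sibsonMean p ℓ t) t := by
  have hsum := HasDerivAt.fun_sum fun y (_ : y ∈ Finset.univ) =>
    hasDerivAt_tiltedMass_rpow hp ℓ ht y
  have hpos := (sibsonSum_pos hp hp0 ℓ t).ne'
  refine (((hasDerivAt_id t).const_add 1).mul (hsum.log hpos)).congr_deriv ?_
  change 1 * Real.log (sibsonSum p ℓ t) + (1 + t) * (_ / sibsonSum p ℓ t) = _
  rw [sibsonMean_eq hp hp0 ℓ ht, one_mul, ← Finset.mul_sum, mul_div_assoc', ← mul_assoc,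
    mul_inv_cancel₀ (by positivity), one_mul, Finset.sum_div]
  refine congrArg _ (Finset.sum_congr rfl fun y _ => ?_)
  rw [sibsonOpt]
  ring

lemma log_add_mul_log_sum_le_sibsonLog (hp : ∀ z, 0 ≤ p z) (ℓ : X × Y → ℝ) {c : ℝ} (hc : 0 < c)
    {w : Y → ℝ} (hw0 : ∀ y, 0 ≤ w y) (hw1 : ∀ y, w y ≤ 1) (hwsum : 0 < ∑ y, w y)
    (hw : ∀ y, w y ≠ 0 → ∃ x, c ≤ p (x, y) ∧ w y ≤ Real.exp (ℓ (x, y))) {t : ℝ} (ht : 0 ≤ t) :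
    Real.log c + (1 + t) * Real.log (∑ y, w y) ≤ sibsonLog p ℓ t := by
  have ht1 : 1 + t ≠ 0 := by positivity
  have hmass : ∀ y, c * w y ^ (1 + t) ≤ tiltedMass p ℓ t y := fun y => by
    by_cases h0 : w y = 0
    · rw [h0, Real.zero_rpow ht1, mul_zero]
      exact tiltedMass_nonneg hp ℓ t y
    obtain ⟨x, hcx, hwx⟩ := hw y h0
    refine le_trans ?_ (mul_exp_le_tiltedMass hp ℓ t x y)
    rw [mul_comm t, Real.exp_mul]
    refine mul_le_mul hcx ?_ (Real.rpow_nonneg (hw0 y) _) (hp _)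
    exact (Real.rpow_le_rpow_of_exponent_ge ((hw0 y).lt_of_ne' h0) (hw1 y)
      (le_add_of_nonneg_left zero_le_one)).trans (Real.rpow_le_rpow (hw0 y) hwx ht)
  have hsum : c ^ (1 + t)⁻¹ * ∑ y, w y ≤ sibsonSum p ℓ t := by
    rw [Finset.mul_sum]
    refine Finset.sum_le_sum fun y _ => ?_
    refine le_of_eq_of_le ?_ (Real.rpow_le_rpow
      (mul_nonneg hc.le (Real.rpow_nonneg (hw0 y) _)) (hmass y) (by positivity))
    rw [Real.mul_rpow hc.le (Real.rpow_nonneg (hw0 y) _), Real.rpow_rpow_inv (hw0 y) ht1]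
  calc Real.log c + (1 + t) * Real.log (∑ y, w y)
      = (1 + t) * Real.log (c ^ (1 + t)⁻¹ * ∑ y, w y) := by
        rw [Real.log_mul (by positivity) hwsum.ne', Real.log_rpow hc]
        field_simp
    _ ≤ sibsonLog p ℓ t := mul_le_mul_of_nonneg_left
        (Real.log_le_log (by positivity) hsum) (by positivity)

lemma exists_eventually_exp_le_sum_prod (hp : ∀ z, 0 ≤ p z) (hp0 : p ≠ 0) {ℓ : X × Y → ℝ}
    {Φ : ∀ n : ℕ, (Fin n → Y) → ℝ} (hΦ : ∀ n y, 0 ≤ Φ n y) (hΦsum : ∀ n, ∑ y, Φ n y ≤ 1)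
    {g : ℕ → ℝ} (hg : ∀ δ > 0, ∀ᶠ n : ℕ in atTop, g n ≤ Real.exp (n * δ)) {C J R η : ℝ}
    (hgrowth : ∀ t, 0 ≤ t → C + t * J ≤ sibsonLog p ℓ t) (hRJ : R < J) (hη : 0 < η) :
    ∃ t, 0 ≤ t ∧ ∀ᶠ n : ℕ in atTop, Real.exp (-(n * (t * R - sibsonLog p ℓ t + η))) ≤
      ∑ z : Fin n → X × Y with
        g n * Real.exp (n * R) * Φ n (Prod.snd ∘ z) ≤ Real.exp (∑ i, ℓ (z i)), ∏ i, p (z i) := by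
  obtain ⟨t, ht, hRM, hslack⟩ := exists_lt_deriv_and_mul_sub_le
    (fun t ht => hasDerivAt_sibsonLog hp hp0 ℓ ht) hgrowth hRJ (half_pos hη)
  refine ⟨t, ht, eventually_exp_le_sum_prod hp (sibsonTilt_nonneg hp ℓ t)
    (sum_sibsonTilt hp hp0 ℓ ht) (fun z hz => by simp [sibsonTilt, hz])
    (tendsto_sum_prod_filter_not_le_exp_sum (sibsonTilt_nonneg hp ℓ t) (sum_sibsonTilt hp hp0 ℓ ht)
      hΦ hΦsum hg ?_) ?_⟩
  · simpa only [margY_sibsonTilt p ℓ ht, sibsonMean] using hRM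
  · rw [sum_sibsonTilt_mul_log_div hp hp0 ℓ ht]
    linarith

end Tilting

section Log

lemma elog2_zero : elog2 0 = ⊥ := if_pos rfl

lemma elog2_ofReal {x : ℝ} (hx : 0 < x) : elog2 (ENNReal.ofReal x) = (Real.logb 2 x : ℝ) := by
  rw [elog2, if_neg (ENNReal.ofReal_pos.2 hx).ne', if_neg ENNReal.ofReal_ne_top,
    ENNReal.toReal_ofReal hx.le]

lemma elog2_le_coe_iff {s : ℝ≥0∞} {a : ℝ} :
    elog2 s ≤ (a : EReal) ↔ s ≤ ENNReal.ofReal ((2 : ℝ) ^ a) := by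
  rcases eq_or_ne s 0 with rfl | h0
  · simp [elog2_zero]
  rcases eq_or_ne s ⊤ with rfl | htop
  · simp [elog2]
  rw [elog2, if_neg h0, if_neg htop, EReal.coe_le_coe_iff,
    Real.logb_le_iff_le_rpow one_lt_two (ENNReal.toReal_pos h0 htop),
    ← ENNReal.le_ofReal_iff_toReal_le htop (by positivity)]

lemma coe_le_elog2_iff {s : ℝ≥0∞} {a : ℝ} :
    (a : EReal) ≤ elog2 s ↔ ENNReal.ofReal ((2 : ℝ) ^ a) ≤ s := by
  rcases eq_or_ne s 0 with rfl | h0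
  · simp [elog2_zero, Real.rpow_pos_of_pos]
  rcases eq_or_ne s ⊤ with rfl | htop
  · simp [elog2]
  rw [elog2, if_neg h0, if_neg htop, EReal.coe_le_coe_iff,
    Real.le_logb_iff_rpow_le one_lt_two (ENNReal.toReal_pos h0 htop),
    ENNReal.ofReal_le_iff_le_toReal htop]

lemma elog2_mono : Monotone elog2 := fun a b hab => by
  refine EReal.le_of_forall_lt_iff_le.1 fun c hc => ?_
  exact elog2_le_coe_iff.2 (hab.trans (elog2_le_coe_iff.1 hc.le))

lemma coe_le_inv_mul_iff {t : ℝ} (ht : 0 < t) {c : ℝ} {e : EReal} :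
    (c : EReal) ≤ (t⁻¹ : ℝ) * e ↔ ((t * c : ℝ) : EReal) ≤ e := by
  rw [EReal.coe_inv, ← EReal.div_eq_inv_mul,
    EReal.le_div_iff_mul_le (EReal.coe_pos.2 ht) (EReal.coe_ne_top t), mul_comm t c, EReal.coe_mul]

lemma inv_mul_le_coe_iff {t : ℝ} (ht : 0 < t) {c : ℝ} {e : EReal} :
    (t⁻¹ : ℝ) * e ≤ (c : EReal) ↔ e ≤ ((t * c : ℝ) : EReal) := by
  rw [EReal.coe_inv, ← EReal.div_eq_inv_mul,
    EReal.div_le_iff_le_mul (EReal.coe_pos.2 ht) (EReal.coe_ne_top t), EReal.coe_mul]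

lemma neg_one_div_mul_eq (n : ℕ) (e : EReal) :
    (((-1 : ℝ) / n : ℝ) : EReal) * e = ((n : ℝ)⁻¹ : ℝ) * -e := by
  rw [neg_div, one_div, EReal.coe_neg, neg_mul, mul_neg]

lemma neg_one_div_mul_elog2_le_coe_iff {n : ℕ} (hn : 0 < n) {c : ℝ} {s : ℝ≥0∞} :
    (((-1 : ℝ) / n : ℝ) : EReal) * elog2 s ≤ (c : EReal) ↔
      ENNReal.ofReal ((2 : ℝ) ^ (-(n * c))) ≤ s := by
  rw [neg_one_div_mul_eq, inv_mul_le_coe_iff (Nat.cast_pos.2 hn), EReal.neg_le, ← EReal.coe_neg,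
    coe_le_elog2_iff]

end Log

section RenyiMutualInformation

lemma renyiD_one_add {α : Type*} [Fintype α] {t : ℝ} (ht : 0 < t) (P Q : α → ℝ≥0∞) :
    renyiD (ENNReal.ofReal (1 + t)) P Q =
      ((t⁻¹ : ℝ) : EReal) * elog2 (∑ a, P a ^ (1 + t) * Q a ^ (-t)) := by
  have hne0 : ENNReal.ofReal (1 + t) ≠ 0 := (ENNReal.ofReal_pos.2 (by positivity)).ne'
  have hne1 : ENNReal.ofReal (1 + t) ≠ 1 := by
    rw [Ne, ENNReal.ofReal_eq_one]
    linarith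
  rw [renyiD, if_neg hne0, if_neg hne1, if_neg ENNReal.ofReal_ne_top,
    ENNReal.toReal_ofReal (by positivity), add_sub_cancel_left, sub_add_cancel_left]

lemma renyiD_top {α : Type*} [Fintype α] (P Q : α → ℝ≥0∞) :
    renyiD ⊤ P Q = elog2 (⨆ a, P a / Q a) := by
  rw [renyiD, if_neg ENNReal.top_ne_zero, if_neg ENNReal.top_ne_one, if_pos rfl]

lemma IsDist.le_one {α : Type*} [Fintype α] {P : α → ℝ≥0∞} (hP : IsDist P) (a : α) : P a ≤ 1 :=
  (Finset.single_le_sum (f := P) (fun _ _ => bot_le) (Finset.mem_univ a)).trans_eq hP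

lemma IsDist.ne_top {α : Type*} [Fintype α] {P : α → ℝ≥0∞} (hP : IsDist P) (a : α) : P a ≠ ⊤ :=
  ne_top_of_le_ne_top ENNReal.one_ne_top (hP.le_one a)

variable {X Y : Type*} [Fintype X] [Fintype Y] {P : X × Y → ℝ≥0∞}

lemma IsDist.margX (hP : IsDist P) : IsDist (margX P) :=
  (Fintype.sum_prod_type P).symm.trans hP

lemma le_margX (P : X × Y → ℝ≥0∞) (z : X × Y) : P z ≤ margX P z.1 :=
  Finset.single_le_sum (f := fun y => P (z.1, y)) (fun _ _ => bot_le) (Finset.mem_univ z.2)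

/-- The largest conditional probability of `y` given a value of `X`; the sum of `condMax P` over
`Y` is `2` to the power of the mutual information of order `∞`. -/
def condMax (P : X × Y → ℝ≥0∞) (y : Y) : ℝ≥0∞ := ⨆ x, P (x, y) / margX P x

lemma condMax_le_one (P : X × Y → ℝ≥0∞) (y : Y) : condMax P y ≤ 1 :=
  iSup_le fun x => ENNReal.div_le_of_le_mul ((le_margX P (x, y)).trans_eq (one_mul _).symm)

lemma le_margX_mul_condMax (hP : IsDist P) (z : X × Y) : P z ≤ margX P z.1 * condMax P z.2 := by
  rcases eq_or_ne (margX P z.1) 0 with h0 | h0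
  · exact (le_margX P z).trans (h0 ▸ bot_le)
  · rw [mul_comm]
    exact (ENNReal.div_le_iff_le_mul (Or.inl h0) (Or.inl (hP.margX.ne_top _))).1
      (le_iSup (fun x => P (x, z.2) / margX P x) z.1)

lemma sum_condMax_ne_top (P : X × Y → ℝ≥0∞) : ∑ y, condMax P y ≠ ⊤ :=
  ENNReal.sum_ne_top.2 fun y _ => ne_top_of_le_ne_top ENNReal.one_ne_top (condMax_le_one P y)

lemma sum_condMax_ne_zero (hP : IsDist P) : ∑ y, condMax P y ≠ 0 := fun h => by
  have hzero : ∀ z, P z = 0 := fun z => by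
    rw [← nonpos_iff_eq_zero]
    refine (le_margX_mul_condMax hP z).trans_eq ?_
    rw [Finset.sum_eq_zero_iff.1 h z.2 (Finset.mem_univ _), mul_zero]
  exact zero_ne_one ((Finset.sum_eq_zero fun z _ => hzero z).symm.trans hP)

/-- The normalisation of `condMax P`: the distribution attaining the minimum that defines the
mutual information of order `∞`. -/
def condMaxDist (P : X × Y → ℝ≥0∞) (y : Y) : ℝ≥0∞ := condMax P y / ∑ y, condMax P y

lemma isDist_condMaxDist (hP : IsDist P) : IsDist (condMaxDist P) := by
  simp only [IsDist, condMaxDist, ENNReal.div_eq_inv_mul, ← Finset.mul_sum]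
  exact ENNReal.inv_mul_cancel (sum_condMax_ne_zero hP) (sum_condMax_ne_top P)

lemma le_sum_condMax_mul (hP : IsDist P) (z : X × Y) :
    P z ≤ (∑ y, condMax P y) * (margX P z.1 * condMaxDist P z.2) := by
  rw [condMaxDist, mul_left_comm,
    ENNReal.mul_div_cancel (sum_condMax_ne_zero hP) (sum_condMax_ne_top P)]
  exact le_margX_mul_condMax hP z

lemma sum_condMax_le_iSup_div (hP : IsDist P) {Q : Y → ℝ≥0∞} (hQ : IsDist Q) :
    ∑ y, condMax P y ≤ ⨆ z : X × Y, P z / (margX P z.1 * Q z.2) := by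
  set S := ⨆ z : X × Y, P z / (margX P z.1 * Q z.2)
  rcases eq_or_ne S ⊤ with htop | htop
  · exact htop ▸ le_top
  have hterm : ∀ z, P z ≤ S * (margX P z.1 * Q z.2) := fun z => by
    have hdiv : P z / (margX P z.1 * Q z.2) ≤ S :=
      le_iSup (fun z : X × Y => P z / (margX P z.1 * Q z.2)) z
    rcases eq_or_ne (P z) 0 with hz | hz
    · exact hz ▸ bot_le
    have h0 : margX P z.1 * Q z.2 ≠ 0 := fun h0 =>
      htop (top_le_iff.1 (by rwa [h0, ENNReal.div_zero hz] at hdiv))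
    exact (ENNReal.div_le_iff_le_mul (Or.inl h0)
      (Or.inl (ENNReal.mul_ne_top (hP.margX.ne_top _) (hQ.ne_top _)))).1 hdiv
  calc ∑ y, condMax P y ≤ ∑ y, S * Q y := Finset.sum_le_sum fun y _ => iSup_le fun x =>
        ENNReal.div_le_of_le_mul ((hterm (x, y)).trans_eq (by ring))
    _ = S := by rw [← Finset.mul_sum, hQ, mul_one]

lemma renyiMI_top_eq (hP : IsDist P) : renyiMI ⊤ P = elog2 (∑ y, condMax P y) := by
  refine le_antisymm (iInf_le_of_le ⟨condMaxDist P, isDist_condMaxDist hP⟩ ?_)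
    (le_iInf fun Q => ?_)
  · rw [renyiD_top]
    exact elog2_mono (iSup_le fun z => ENNReal.div_le_of_le_mul (le_sum_condMax_mul hP z))
  · rw [renyiD_top]
    exact elog2_mono (sum_condMax_le_iSup_div hP Q.2)

end RenyiMutualInformation

section Sibson

variable {X Y : Type*} [Fintype X] [Fintype Y]

lemma sibsonSum_rpow_mul_sibsonTilt {p : X × Y → ℝ} (hp : ∀ z, 0 ≤ p z) (ℓ : X × Y → ℝ) {t : ℝ}
    (ht : 0 ≤ t) {z : X × Y} (hz : p z ≠ 0) :
    sibsonSum p ℓ t ^ (1 + t) * sibsonTilt p ℓ t z =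
      p z * (Real.exp (ℓ z) / sibsonOpt p ℓ t z.2) ^ t := by
  have ht1 : 1 + t ≠ 0 := by positivity
  have hA := sibsonSum_pos hp (fun h => hz (congrFun h z)) ℓ t
  have hq := sibsonOpt_pos hp ℓ t hz
  have hT : tiltedMass p ℓ t z.2 = (sibsonOpt p ℓ t z.2 * sibsonSum p ℓ t) ^ (1 + t) := by
    rw [sibsonOpt, div_mul_cancel₀ _ hA.ne', Real.rpow_inv_rpow (tiltedMass_nonneg hp ℓ t _) ht1]
  rw [sibsonTilt, hT, Real.mul_rpow hq.le hA.le, Real.div_rpow (Real.exp_nonneg _) hq.le,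
    ← Real.exp_mul, Real.rpow_one_add' hq.le ht1, mul_comm (ℓ z)]
  field_simp

/-- The logarithm of the conditional probability of `x` giving `y`, for `z = (x, y)`; where `P`
vanishes it has the junk value `0`. -/
def logCond (P : X × Y → ℝ≥0∞) (z : X × Y) : ℝ := Real.log (P z / margX P z.1).toReal

variable {P : X × Y → ℝ≥0∞}

lemma IsDist.sum_toReal {α : Type*} [Fintype α] {P : α → ℝ≥0∞} (hP : IsDist P) :
    ∑ a, (P a).toReal = 1 := by
  rw [← ENNReal.toReal_sum fun a _ => hP.ne_top a, hP, ENNReal.toReal_one]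

lemma IsDist.toReal_ne_zero {α : Type*} [Fintype α] {P : α → ℝ≥0∞} (hP : IsDist P) :
    (fun a => (P a).toReal) ≠ 0 := fun h => by
  simpa [congrFun h] using hP.sum_toReal

lemma margX_ne_zero {z : X × Y} (hz : P z ≠ 0) : margX P z.1 ≠ 0 :=
  (pos_of_ne_zero hz |>.trans_le (le_margX P z)).ne'

lemma exp_logCond (hP : IsDist P) {z : X × Y} (hz : P z ≠ 0) :
    Real.exp (logCond P z) = (P z / margX P z.1).toReal :=
  Real.exp_log <| ENNReal.toReal_pos (ENNReal.div_ne_zero.2 ⟨hz, hP.margX.ne_top _⟩)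
    (ENNReal.div_ne_top (hP.ne_top z) (margX_ne_zero hz))

lemma rpow_mul_rpow_eq_ofReal_sibsonTilt (hP : IsDist P) {t : ℝ} (ht : 0 ≤ t) (z : X × Y) :
    P z ^ (1 + t) * (margX P z.1 *
        ENNReal.ofReal (sibsonOpt (fun z => (P z).toReal) (logCond P) t z.2)) ^ (-t) =
      ENNReal.ofReal (sibsonSum (fun z => (P z).toReal) (logCond P) t ^ (1 + t) *
        sibsonTilt (fun z => (P z).toReal) (logCond P) t z) := by
  have ht1 : 0 < 1 + t := by positivity
  rcases eq_or_ne (P z) 0 with h0 | h0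
  · simp [h0, sibsonTilt, ENNReal.zero_rpow_of_pos ht1]
  have hp : (P z).toReal ≠ 0 := (ENNReal.toReal_pos h0 (hP.ne_top z)).ne'
  have hq := sibsonOpt_pos (p := fun z => (P z).toReal) (fun _ => ENNReal.toReal_nonneg)
    (logCond P) t hp
  rw [sibsonSum_rpow_mul_sibsonTilt (fun _ => ENNReal.toReal_nonneg) _ ht hp, exp_logCond hP h0,
    ENNReal.ofReal_mul ENNReal.toReal_nonneg, ENNReal.ofReal_toReal (hP.ne_top z),
    ← ENNReal.ofReal_rpow_of_nonneg (by positivity) ht, ENNReal.ofReal_div_of_pos hq,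
    ENNReal.ofReal_toReal (ENNReal.div_ne_top (hP.ne_top z) (margX_ne_zero h0)),
    ENNReal.rpow_add _ _ h0 (hP.ne_top z), ENNReal.rpow_one, mul_assoc, ENNReal.rpow_neg,
    ← ENNReal.inv_rpow, ← ENNReal.mul_rpow_of_nonneg _ _ ht,
    ENNReal.mul_inv (Or.inl (margX_ne_zero h0)) (Or.inl (hP.margX.ne_top _)), ← mul_assoc,
    div_eq_mul_inv, div_eq_mul_inv]

lemma renyiMI_one_add_le (hP : IsDist P) {t : ℝ} (ht : 0 < t) :
    renyiMI (ENNReal.ofReal (1 + t)) P ≤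
      ((t⁻¹ * (sibsonLog (fun z => (P z).toReal) (logCond P) t / Real.log 2) : ℝ) : EReal) := by
  have hp : ∀ z, 0 ≤ (P z).toReal := fun _ => ENNReal.toReal_nonneg
  have hA := sibsonSum_pos hp hP.toReal_ne_zero (logCond P) t
  have hQ : IsDist fun y => ENNReal.ofReal (sibsonOpt (fun z => (P z).toReal) (logCond P) t y) := by
    rw [IsDist, ← ENNReal.ofReal_sum_of_nonneg fun y _ => sibsonOpt_nonneg hp _ t y,
      sum_sibsonOpt hp hP.toReal_ne_zero, ENNReal.ofReal_one]
  refine iInf_le_of_le ⟨_, hQ⟩ ?_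
  simp only [renyiD_one_add ht, rpow_mul_rpow_eq_ofReal_sibsonTilt hP ht.le]
  rw [← ENNReal.ofReal_sum_of_nonneg fun z _ => mul_nonneg (Real.rpow_nonneg hA.le _)
      (sibsonTilt_nonneg hp _ t z), ← Finset.mul_sum,
    sum_sibsonTilt hp hP.toReal_ne_zero _ ht.le, mul_one,
    elog2_ofReal (Real.rpow_pos_of_pos hA _), ← EReal.coe_mul, Real.logb, Real.log_rpow hA,
    sibsonLog]

lemma mul_sub_sibsonLog_div_le (hP : IsDist P) {t : ℝ} (ht : 0 ≤ t) (r : ℝ) :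
    ((t * r - sibsonLog (fun z => (P z).toReal) (logCond P) t / Real.log 2 : ℝ) : EReal) ≤
      (t : EReal) * ((r : EReal) - renyiMI (ENNReal.ofReal (1 + t)) P) := by
  rcases ht.eq_or_lt with rfl | ht
  · have hsum := hP.sum_toReal
    rw [Fintype.sum_prod_type_right] at hsum
    simp [sibsonLog, sibsonSum, tiltedMass, hsum]
  · refine le_trans (le_of_eq ?_) (mul_le_mul_of_nonneg_left
      (EReal.sub_le_sub le_rfl (renyiMI_one_add_le hP ht)) (EReal.coe_nonneg.2 ht.le))
    rw [← EReal.coe_sub, ← EReal.coe_mul, mul_sub, mul_inv_cancel_left₀ ht.ne']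

lemma exists_condMax_toReal_eq (hP : IsDist P) {y : Y} (hy : condMax P y ≠ 0) :
    ∃ x, P (x, y) ≠ 0 ∧ (condMax P y).toReal = Real.exp (logCond P (x, y)) := by
  cases isEmpty_or_nonempty X
  · exact absurd (iSup_of_empty _) hy
  obtain ⟨x, hx⟩ := exists_eq_ciSup_of_finite (f := fun x => P (x, y) / margX P x)
  rw [condMax, ← hx] at hy ⊢
  have h0 : P (x, y) ≠ 0 := fun h0 => hy (by rw [h0, ENNReal.zero_div])
  exact ⟨x, h0, (exp_logCond hP h0).symm⟩

lemma exists_add_mul_log_sum_condMax_le (hP : IsDist P) :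
    ∃ C, ∀ t, 0 ≤ t → C + t * Real.log (∑ y, condMax P y).toReal ≤
      sibsonLog (fun z => (P z).toReal) (logCond P) t := by
  have hpos : ∀ z, P z ≠ 0 → 0 < (P z).toReal := fun z hz => ENNReal.toReal_pos hz (hP.ne_top z)
  obtain ⟨z₀, hz₀, hmin⟩ : ∃ z₀, P z₀ ≠ 0 ∧ ∀ z, P z ≠ 0 → (P z₀).toReal ≤ (P z).toReal := by
    obtain ⟨z, -, hz⟩ := Finset.exists_ne_zero_of_sum_ne_zero (hP.trans_ne one_ne_zero)
    simpa using (Finset.univ.filter (P · ≠ 0)).exists_min_image (fun z => (P z).toReal)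
      ⟨z, by simpa using hz⟩
  have hsum : (∑ y, condMax P y).toReal = ∑ y, (condMax P y).toReal :=
    ENNReal.toReal_sum fun y _ => ENNReal.sum_ne_top.1 (sum_condMax_ne_top P) y (Finset.mem_univ y)
  refine ⟨Real.log (P z₀).toReal + Real.log (∑ y, condMax P y).toReal, fun t ht => ?_⟩
  rw [add_assoc, ← one_add_mul, hsum]
  refine log_add_mul_log_sum_le_sibsonLog (fun _ => ENNReal.toReal_nonneg) _ (hpos z₀ hz₀)
    (fun _ => ENNReal.toReal_nonneg) (fun y => ?_) ?_ (fun y hy => ?_) ht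
  · exact ENNReal.toReal_le_of_le_ofReal zero_le_one (by simpa using condMax_le_one P y)
  · rw [← hsum]
    exact ENNReal.toReal_pos (sum_condMax_ne_zero hP) (sum_condMax_ne_top P)
  · obtain ⟨x, hx, heq⟩ := exists_condMax_toReal_eq hP
      fun h => hy (by rw [h, ENNReal.toReal_zero])
    exact ⟨x, hmin _ hx, heq.le⟩

end Sibson

section Types

variable {Y : Type*} [Fintype Y] [DecidableEq Y]

lemma typeClassCard_pos {n : ℕ} (ys : Fin n → Y) : 0 < typeClassCard ys :=
  Finset.card_pos.2 ⟨ys, by simp⟩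

lemma numTypes_pos {n : ℕ} (ys : Fin n → Y) : 0 < numTypes Y n :=
  Finset.card_pos.2 ⟨seqType ys, Finset.mem_image_of_mem _ (Finset.mem_univ ys)⟩

variable (Y) in
lemma numTypes_le (n : ℕ) : numTypes Y n ≤ (n + 1) ^ Fintype.card Y := by
  have hsub : (Finset.univ.image fun ys : Fin n → Y => seqType ys) ⊆
      Fintype.piFinset fun _ : Y => Finset.range (n + 1) := fun s hs => by
    obtain ⟨ys, -, rfl⟩ := Finset.mem_image.1 hs
    refine Fintype.mem_piFinset.2 fun y => Finset.mem_range_succ_iff.2 ?_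
    exact (Finset.card_le_univ _).trans_eq (Fintype.card_fin n)
  exact (Finset.card_le_card hsub).trans_eq (by simp [Fintype.card_piFinset])

lemma prod_eq_prod_pow_seqType {M : Type*} [CommMonoid M] {n : ℕ} (Q : Y → M) (ys : Fin n → Y) :
    ∏ i, Q (ys i) = ∏ y, Q y ^ seqType ys y := by
  simp only [seqType, Finset.prod_comp Q ys]
  exact Finset.prod_subset (Finset.subset_univ _) fun y _ hy => by
    rw [Finset.card_eq_zero.2 (Finset.filter_eq_empty_iff.2 fun i _ hi =>
      hy (Finset.mem_image.2 ⟨i, Finset.mem_univ i, hi⟩)), pow_zero]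

lemma typeClassCard_mul_prod_le_one {n : ℕ} {Q : Y → ℝ≥0∞} (hQ : IsDist Q) (ys : Fin n → Y) :
    typeClassCard ys * ∏ i, Q (ys i) ≤ 1 := by
  calc typeClassCard ys * ∏ i, Q (ys i)
      = ∑ zs : Fin n → Y with seqType zs = seqType ys, ∏ i, Q (zs i) := by
        rw [typeClassCard, ← nsmul_eq_mul, ← Finset.sum_const]
        refine Finset.sum_congr rfl fun zs hzs => ?_
        rw [prod_eq_prod_pow_seqType, prod_eq_prod_pow_seqType Q zs, (Finset.mem_filter.1 hzs).2]
    _ ≤ ∑ zs : Fin n → Y, ∏ i, Q (zs i) := Finset.sum_le_sum_of_subset (Finset.subset_univ _)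
    _ = 1 := by rw [← Fintype.sum_pow, hQ, one_pow]

lemma prodDist_le_mul_PhiY {n : ℕ} {Q : Y → ℝ≥0∞} (hQ : IsDist Q) (ys : Fin n → Y) :
    prodDist n Q ys ≤ ((n : ℝ≥0∞) + 1) ^ Fintype.card Y * PhiY Y n ys := by
  have hnum : (numTypes Y n : ℝ≥0∞) ≤ ((n : ℝ≥0∞) + 1) ^ Fintype.card Y := by
    exact_mod_cast numTypes_le Y n
  have h0 : (numTypes Y n : ℝ≥0∞) ≠ 0 := Nat.cast_ne_zero.2 (numTypes_pos ys).ne'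
  calc prodDist n Q ys ≤ (typeClassCard ys : ℝ≥0∞)⁻¹ := by
        rw [ENNReal.le_inv_iff_mul_le, mul_comm]
        exact typeClassCard_mul_prod_le_one hQ ys
    _ = numTypes Y n * PhiY Y n ys := by
        rw [PhiY, ENNReal.mul_inv (Or.inl h0) (Or.inl (ENNReal.natCast_ne_top _)),
          ENNReal.mul_inv_cancel_left h0 (ENNReal.natCast_ne_top _)]
    _ ≤ _ := mul_le_mul_left hnum _

lemma sum_PhiY_of_seqType_eq {n : ℕ} (ys : Fin n → Y) :
    ∑ zs : Fin n → Y with seqType zs = seqType ys, PhiY Y n zs = (numTypes Y n : ℝ≥0∞)⁻¹ := by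
  have hconst : ∀ zs ∈ Finset.univ.filter (fun zs : Fin n → Y => seqType zs = seqType ys),
      PhiY Y n zs = PhiY Y n ys := fun zs hzs => by
    simp only [PhiY, typeClassCard, (Finset.mem_filter.1 hzs).2]
  have h0 : (typeClassCard ys : ℝ≥0∞) ≠ 0 := Nat.cast_ne_zero.2 (typeClassCard_pos ys).ne'
  rw [Finset.sum_congr rfl hconst, Finset.sum_const, nsmul_eq_mul, PhiY, ← typeClassCard,
    ENNReal.mul_inv (Or.inr (ENNReal.natCast_ne_top _)) (Or.inr h0), mul_left_comm,
    ENNReal.mul_inv_cancel h0 (ENNReal.natCast_ne_top _), mul_one]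

variable (Y) in
lemma sum_PhiY_le_one (n : ℕ) : ∑ ys, PhiY Y n ys ≤ 1 := by
  calc ∑ ys, PhiY Y n ys
      = ∑ s ∈ Finset.univ.image fun ys : Fin n → Y => seqType ys,
          ∑ zs : Fin n → Y with seqType zs = s, PhiY Y n zs :=
        (Finset.sum_fiberwise_of_maps_to
          (fun ys _ => Finset.mem_image_of_mem _ (Finset.mem_univ ys)) _).symm
    _ = ∑ _ ∈ Finset.univ.image fun ys : Fin n → Y => seqType ys, (numTypes Y n : ℝ≥0∞)⁻¹ :=
        Finset.sum_congr rfl fun _ hs => by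
          obtain ⟨ys, -, rfl⟩ := Finset.mem_image.1 hs
          exact sum_PhiY_of_seqType_eq ys
    _ = numTypes Y n * (numTypes Y n : ℝ≥0∞)⁻¹ := by rw [Finset.sum_const, nsmul_eq_mul, numTypes]
    _ ≤ 1 := ENNReal.mul_inv_le_one _

end Types

section ExceedProb

variable {X Y : Type*} [Fintype X] [Fintype Y]

/-- The probability under `P ^ n` of the pairs of sequences at which `P ^ n` is at least `c` times
`P_X ^ n × Φ`. -/
def exceedProb (n : ℕ) (P : X × Y → ℝ≥0∞) (Φ : (Fin n → Y) → ℝ≥0∞) (c : ℝ≥0∞) : ℝ≥0∞ :=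
  ∑ p ∈ Finset.univ.filter (fun p : (Fin n → X) × (Fin n → Y) =>
    c * (prodDist n (margX P) p.1 * Φ p.2) ≤ prodJoint n P p), prodJoint n P p

lemma sum_prodJoint (n : ℕ) (P : X × Y → ℝ≥0∞) : ∑ p, prodJoint n P p = (∑ z, P z) ^ n := by
  rw [Fintype.sum_pow,
    ← (Equiv.arrowProdEquivProdArrow (Fin n) (fun _ => X) (fun _ => Y)).sum_comp]
  rfl

variable {P : X × Y → ℝ≥0∞} {n : ℕ} {Φ : (Fin n → Y) → ℝ≥0∞} {c : ℝ≥0∞}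

lemma exceedProb_eq_sum_with (P : X × Y → ℝ≥0∞) (Φ : (Fin n → Y) → ℝ≥0∞) (c : ℝ≥0∞) :
    exceedProb n P Φ c = ∑ z : Fin n → X × Y with
      c * ((∏ i, margX P (z i).1) * Φ (Prod.snd ∘ z)) ≤ ∏ i, P (z i), ∏ i, P (z i) := by
  simp only [exceedProb, Finset.sum_filter]
  exact ((Equiv.arrowProdEquivProdArrow (Fin n) (fun _ => X) (fun _ => Y)).sum_comp _).symm

lemma exceedProb_le_one (hP : IsDist P) : exceedProb n P Φ c ≤ 1 :=
  (Finset.sum_le_sum_of_subset (Finset.filter_subset _ _)).trans_eq <| by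
    rw [sum_prodJoint, hP, one_pow]

lemma rpow_mul_le_of_mul_le {B p q : ℝ≥0∞} {t : ℝ} (ht : 0 ≤ t) (hp : p ≠ ⊤) (h : B * q ≤ p) :
    B ^ t * p ≤ p ^ (1 + t) * q ^ (-t) := by
  rcases eq_or_ne p 0 with rfl | h0
  · rw [mul_zero]
    exact bot_le
  rw [ENNReal.rpow_add _ _ h0 hp, ENNReal.rpow_one, mul_comm, mul_assoc, ENNReal.rpow_neg,
    ← div_eq_mul_inv]
  refine mul_le_mul_right ((ENNReal.le_div_iff_mul_le ?_ ?_).2 ?_) p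
  · exact Or.inr (by simp [h0, hp])
  · exact Or.inr (ENNReal.rpow_ne_top_of_nonneg ht hp)
  · rw [← ENNReal.mul_rpow_of_nonneg _ _ ht]
    exact ENNReal.rpow_le_rpow h ht

lemma mul_prodDist_le_mul {B K : ℝ≥0∞} {Q : Y → ℝ≥0∞} {x : Fin n → X} {y : Fin n → Y}
    (hΦ : prodDist n Q y ≤ K * Φ y) :
    B * (prodDist n (margX P) x * prodDist n Q y) ≤ B * K * (prodDist n (margX P) x * Φ y) :=
  calc B * (prodDist n (margX P) x * prodDist n Q y)
      ≤ B * (prodDist n (margX P) x * (K * Φ y)) := by gcongr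
    _ = B * K * (prodDist n (margX P) x * Φ y) := by ring

lemma rpow_mul_exceedProb_le (hP : IsDist P) {Q : Y → ℝ≥0∞} (hQ : IsDist Q) {B K : ℝ≥0∞}
    (hΦ : ∀ y, prodDist n Q y ≤ K * Φ y) (hc : B * K ≤ c) {t : ℝ} (ht : 0 ≤ t) :
    B ^ t * exceedProb n P Φ c ≤ (∑ z, P z ^ (1 + t) * (margX P z.1 * Q z.2) ^ (-t)) ^ n := by
  rw [← sum_prodJoint, exceedProb, Finset.mul_sum]
  refine (Finset.sum_le_sum fun p hp => ?_).trans
    (Finset.sum_le_sum_of_subset (Finset.filter_subset _ _))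
  have hle : B * (prodDist n (margX P) p.1 * prodDist n Q p.2) ≤ prodJoint n P p :=
    (mul_prodDist_le_mul (hΦ p.2)).trans <|
      (mul_le_mul_left hc _).trans (Finset.mem_filter.1 hp).2
  refine (rpow_mul_le_of_mul_le ht (ENNReal.prod_ne_top fun i _ => hP.ne_top _) hle).trans_eq ?_
  simp only [prodJoint, prodDist]
  rw [Finset.prod_mul_distrib, ENNReal.prod_rpow_of_nonneg (by positivity),
    ENNReal.prod_rpow_of_ne_top fun i _ => ENNReal.mul_ne_top (hP.margX.ne_top _) (hQ.ne_top _),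
    Finset.prod_mul_distrib]

lemma sub_div_le_renyiMI (hP : IsDist P) {K : ℝ≥0∞}
    (hΦ : ∀ Q, IsDist Q → ∀ y, prodDist n Q y ≤ K * Φ y) {r : ℝ}
    (hc : ENNReal.ofReal (2 ^ (n * r)) * K ≤ c) (hn : 0 < n) {x : ℝ}
    (hx : ENNReal.ofReal (2 ^ (-(n * x))) ≤ exceedProb n P Φ c) {t : ℝ} (ht : 0 < t) :
    ((r - x / t : ℝ) : EReal) ≤ renyiMI (ENNReal.ofReal (1 + t)) P := by
  refine le_iInf fun Q => ?_
  rw [renyiD_one_add ht, coe_le_inv_mul_iff ht, coe_le_elog2_iff, mul_sub, mul_div_cancel₀ x ht.ne',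
    ← ENNReal.pow_le_pow_left_iff hn.ne']
  refine le_trans (le_of_eq ?_) ((mul_le_mul_right hx _).trans
    (rpow_mul_exceedProb_le hP Q.2 (hΦ Q.1 Q.2) hc ht.le))
  rw [ENNReal.ofReal_rpow_of_pos (by positivity), ← ENNReal.ofReal_mul (by positivity),
    ← ENNReal.ofReal_pow (by positivity), ← Real.rpow_mul zero_le_two, ← Real.rpow_add zero_lt_two,
    ← Real.rpow_mul_natCast zero_le_two]
  ring_nf

lemma iSup_mul_sub_renyiMI_le (hP : IsDist P) {K : ℝ≥0∞}
    (hΦ : ∀ Q, IsDist Q → ∀ y, prodDist n Q y ≤ K * Φ y) {r : ℝ}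
    (hc : ENNReal.ofReal (2 ^ (n * r)) * K ≤ c) (hn : 0 < n) :
    ⨆ t : {t : ℝ // 0 ≤ t}, (t.1 : EReal) * ((r : EReal) - renyiMI (ENNReal.ofReal (1 + t.1)) P) ≤
      (((-1 : ℝ) / n : ℝ) : EReal) * elog2 (exceedProb n P Φ c) := by
  refine iSup_le fun ⟨t, ht⟩ => EReal.le_of_forall_lt_iff_le.1 fun x hx => ?_
  have hxle := (neg_one_div_mul_elog2_le_coe_iff hn).1 hx.le
  rcases ht.eq_or_lt with rfl | ht
  · have hle := hxle.trans (exceedProb_le_one hP)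
    rw [ENNReal.ofReal_le_one, ← Real.rpow_zero 2, Real.rpow_le_rpow_left_iff one_lt_two,
      neg_nonpos, mul_nonneg_iff_of_pos_left (Nat.cast_pos.2 hn)] at hle
    simpa using hle
  · refine (mul_le_mul_of_nonneg_left (EReal.sub_le_sub le_rfl
      (sub_div_le_renyiMI hP hΦ hc hn hxle ht)) (EReal.coe_nonneg.2 ht.le)).trans_eq ?_
    rw [← EReal.coe_sub, ← EReal.coe_mul, sub_sub_cancel, mul_div_cancel₀ x ht.ne']

lemma prodJoint_le (hP : IsDist P) {r : ℝ} (hr : renyiMI ⊤ P ≤ r) (p : (Fin n → X) × (Fin n → Y)) :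
    prodJoint n P p ≤ ENNReal.ofReal (2 ^ (n * r)) *
      (prodDist n (margX P) p.1 * prodDist n (condMaxDist P) p.2) := by
  rw [renyiMI_top_eq hP, elog2_le_coe_iff] at hr
  refine (Finset.prod_le_prod' fun i _ => (le_sum_condMax_mul hP _).trans
    (mul_le_mul_left hr _)).trans_eq ?_
  rw [Finset.prod_mul_distrib, Finset.prod_const, Finset.card_univ, Fintype.card_fin,
    Finset.prod_mul_distrib, ← ENNReal.ofReal_pow (by positivity),
    ← Real.rpow_mul_natCast zero_le_two, mul_comm r]
  rfl

lemma exceedProb_eq_zero (hP : IsDist P) {K : ℝ≥0∞}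
    (hΦ : ∀ Q, IsDist Q → ∀ y, prodDist n Q y ≤ K * Φ y) (hΦtop : ∀ y, Φ y ≠ ⊤) {r : ℝ}
    (hc : ENNReal.ofReal (2 ^ (n * r)) * K < c) (hr : renyiMI ⊤ P ≤ r) :
    exceedProb n P Φ c = 0 := by
  refine Finset.sum_eq_zero fun p hp => by_contra fun h0 => ?_
  have hle := (prodJoint_le hP hr p).trans
    (mul_prodDist_le_mul (hΦ _ (isDist_condMaxDist hP) p.2))
  have hne0 : prodDist n (margX P) p.1 * Φ p.2 ≠ 0 := fun h =>
    h0 (nonpos_iff_eq_zero.1 (hle.trans_eq (by rw [h, mul_zero])))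
  have hne : prodDist n (margX P) p.1 * Φ p.2 ≠ ⊤ :=
    ENNReal.mul_ne_top (ENNReal.prod_ne_top fun i _ => hP.margX.ne_top _) (hΦtop _)
  exact (hle.trans_lt (ENNReal.mul_lt_mul_left hne0 hne hc)).not_ge (Finset.mem_filter.1 hp).2

lemma ofReal_exp_sum_logCond_mul (hP : IsDist P) {z : Fin n → X × Y} (hz : ∀ i, P (z i) ≠ 0) :
    ENNReal.ofReal (Real.exp (∑ i, logCond P (z i))) * ∏ i, margX P (z i).1 = ∏ i, P (z i) := by
  rw [Real.exp_sum, ENNReal.ofReal_prod_of_nonneg fun _ _ => Real.exp_nonneg _,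
    ← Finset.prod_mul_distrib]
  refine Finset.prod_congr rfl fun i _ => ?_
  rw [exp_logCond hP (hz i), ENNReal.ofReal_toReal
    (ENNReal.div_ne_top (hP.ne_top _) (margX_ne_zero (hz i))),
    ENNReal.div_mul_cancel (margX_ne_zero (hz i)) (hP.margX.ne_top _)]

lemma ofReal_sum_prod_le_exceedProb (hP : IsDist P) (hΦ : ∀ y, Φ y ≠ ⊤) {a : ℝ} (ha : 0 ≤ a) :
    ENNReal.ofReal (∑ z : Fin n → X × Y with
        a * (Φ (Prod.snd ∘ z)).toReal ≤ Real.exp (∑ i, logCond P (z i)),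
      ∏ i, (P (z i)).toReal) ≤ exceedProb n P Φ (ENNReal.ofReal a) := by
  rw [exceedProb_eq_sum_with, ENNReal.ofReal_sum_of_nonneg fun z _ =>
    Finset.prod_nonneg fun _ _ => ENNReal.toReal_nonneg]
  simp only [← ENNReal.toReal_prod,
    ENNReal.ofReal_toReal (ENNReal.prod_ne_top fun _ _ => hP.ne_top _)]
  refine Finset.sum_le_sum_of_ne_zero fun z hz h0 => Finset.mem_filter.2 ⟨Finset.mem_univ _, ?_⟩
  have hz0 : ∀ i, P (z i) ≠ 0 := fun i => Finset.prod_ne_zero_iff.1 h0 i (Finset.mem_univ i)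
  calc ENNReal.ofReal a * ((∏ i, margX P (z i).1) * Φ (Prod.snd ∘ z))
      = ENNReal.ofReal (a * (Φ (Prod.snd ∘ z)).toReal) * ∏ i, margX P (z i).1 := by
        rw [ENNReal.ofReal_mul ha, ENNReal.ofReal_toReal (hΦ _), mul_assoc, mul_comm (Φ _)]
    _ ≤ ENNReal.ofReal (Real.exp (∑ i, logCond P (z i))) * ∏ i, margX P (z i).1 :=
        mul_le_mul_left (ENNReal.ofReal_le_ofReal (Finset.mem_filter.1 hz).2) _
    _ = ∏ i, P (z i) := ofReal_exp_sum_logCond_mul hP hz0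

end ExceedProb

section Exponent

lemma eventually_le_exp_of_tendsto_logb_div {g : ℕ → ℝ} (hg0 : ∀ n, 0 < g n)
    (hg : Tendsto (fun n : ℕ => Real.logb 2 (g n) / n) atTop (𝓝 0)) {δ : ℝ} (hδ : 0 < δ) :
    ∀ᶠ n : ℕ in atTop, g n ≤ Real.exp (n * δ) := by
  have hlog2 := Real.log_pos one_lt_two
  filter_upwards [hg.eventually_lt_const (div_pos hδ hlog2), eventually_gt_atTop 0] with n hn hn0
  rw [Real.logb, div_right_comm, div_lt_div_iff_of_pos_right hlog2,
    div_lt_iff₀ (Nat.cast_pos.2 hn0), mul_comm] at hn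
  exact (Real.log_le_iff_le_exp (hg0 n)).1 hn.le

variable {X Y : Type*} [Fintype X] [Fintype Y] {P : X × Y → ℝ≥0∞}

lemma mul_log_two_lt_log_sum_condMax (hP : IsDist P) {r : ℝ} (hr : r < renyiMI ⊤ P) :
    r * Real.log 2 < Real.log (∑ y, condMax P y).toReal := by
  rw [renyiMI_top_eq hP, ← not_le, elog2_le_coe_iff, not_le,
    ENNReal.ofReal_lt_iff_lt_toReal (by positivity) (sum_condMax_ne_top P)] at hr
  rw [← Real.log_rpow zero_lt_two]
  exact Real.log_lt_log (by positivity) hr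

lemma ne_top_of_sum_le_one {α : Type*} [Fintype α] {f : α → ℝ≥0∞} (hf : ∑ a, f a ≤ 1) (a : α) :
    f a ≠ ⊤ :=
  ENNReal.sum_ne_top.1 (ne_top_of_le_ne_top ENNReal.one_ne_top hf) a (Finset.mem_univ a)

lemma exists_eventually_neg_one_div_mul_elog2_exceedProb_le (hP : IsDist P)
    {Φ : ∀ n : ℕ, (Fin n → Y) → ℝ≥0∞} (hΦ : ∀ n, ∑ y, Φ n y ≤ 1) {g : ℕ → ℝ} (hg0 : ∀ n, 0 ≤ g n)
    (hg : ∀ δ > 0, ∀ᶠ n : ℕ in atTop, g n ≤ Real.exp (n * δ)) {r : ℝ} (hr : r < renyiMI ⊤ P)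
    {ε : ℝ} (hε : 0 < ε) :
    ∃ t, 0 ≤ t ∧ ∀ᶠ n : ℕ in atTop, (((-1 : ℝ) / n : ℝ) : EReal) *
        elog2 (exceedProb n P (Φ n) (ENNReal.ofReal (g n * 2 ^ (n * r)))) ≤
      ((t * r - sibsonLog (fun z => (P z).toReal) (logCond P) t / Real.log 2 + ε : ℝ) : EReal) := by
  have hlog2 := Real.log_pos one_lt_two
  have hΦtop := fun n => ne_top_of_sum_le_one (hΦ n)
  have hΦsum : ∀ n, ∑ y, (Φ n y).toReal ≤ 1 := fun n => by
    rw [← ENNReal.toReal_sum fun y _ => hΦtop n y]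
    exact ENNReal.toReal_le_of_le_ofReal zero_le_one (by simpa using hΦ n)
  obtain ⟨C, hC⟩ := exists_add_mul_log_sum_condMax_le hP
  obtain ⟨t, ht, hev⟩ := exists_eventually_exp_le_sum_prod (fun _ => ENNReal.toReal_nonneg)
    hP.toReal_ne_zero
    (fun _ _ => ENNReal.toReal_nonneg) hΦsum hg hC (mul_log_two_lt_log_sum_condMax hP hr)
    (mul_pos hε hlog2)
  refine ⟨t, ht, ?_⟩
  filter_upwards [hev, eventually_gt_atTop 0] with n hn hn0
  have hexp : ∀ x : ℝ, Real.exp (n * (x * Real.log 2)) = 2 ^ (n * x) := fun x => by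
    rw [Real.rpow_def_of_pos zero_lt_two, mul_left_comm, mul_comm (Real.log 2), mul_left_comm]
    ring_nf
  rw [neg_one_div_mul_elog2_le_coe_iff hn0]
  simp only [hexp] at hn
  refine le_trans (ENNReal.ofReal_le_ofReal (le_of_eq_of_le ?_ hn))
    (ofReal_sum_prod_le_exceedProb hP (hΦtop n) (mul_nonneg (hg0 n) (by positivity)))
  rw [Real.rpow_def_of_pos zero_lt_two]
  congr 1
  field_simp

lemma tendsto_neg_one_div_mul_elog2_exceedProb (hP : IsDist P)
    {Φ : ∀ n : ℕ, (Fin n → Y) → ℝ≥0∞} (hΦ : ∀ n, ∑ y, Φ n y ≤ 1) {K : ℕ → ℝ≥0∞}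
    (hK : ∀ n Q, IsDist Q → ∀ y, prodDist n Q y ≤ K n * Φ n y) {g : ℕ → ℝ} (hg0 : ∀ n, 0 ≤ g n)
    (hg : ∀ δ > 0, ∀ᶠ n : ℕ in atTop, g n ≤ Real.exp (n * δ)) {r : ℝ}
    (hc : ∀ n : ℕ, ENNReal.ofReal (2 ^ (n * r)) * K n ≤ ENNReal.ofReal (g n * 2 ^ (n * r)))
    (hr : r < renyiMI ⊤ P) :
    Tendsto (fun n : ℕ => (((-1 : ℝ) / n : ℝ) : EReal) *
        elog2 (exceedProb n P (Φ n) (ENNReal.ofReal (g n * 2 ^ (n * r))))) atTop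
      (𝓝 (⨆ t : {t : ℝ // 0 ≤ t},
        (t.1 : EReal) * ((r : EReal) - renyiMI (ENNReal.ofReal (1 + t.1)) P))) := by
  refine tendsto_order.2 ⟨fun b hb => ?_, fun b hb => ?_⟩
  · filter_upwards [eventually_gt_atTop 0] with n hn
    exact hb.trans_le (iSup_mul_sub_renyiMI_le hP (hK n) (hc n) hn)
  · obtain ⟨x, hx, hxb⟩ := EReal.lt_iff_exists_real_btwn.1 hb
    obtain ⟨y, hxy, hyb⟩ := EReal.lt_iff_exists_real_btwn.1 hxb
    obtain ⟨t, ht, hev⟩ := exists_eventually_neg_one_div_mul_elog2_exceedProb_le hP hΦ hg0 hg hr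
      (sub_pos.2 (EReal.coe_lt_coe_iff.1 hxy))
    have htx := ((mul_sub_sibsonLog_div_le hP ht r).trans
      (le_iSup_of_le (⟨t, ht⟩ : {t : ℝ // 0 ≤ t}) le_rfl)).trans hx.le
    filter_upwards [hev] with n hn
    refine (hn.trans (EReal.coe_le_coe_iff.2 ?_)).trans_lt hyb
    linarith [EReal.coe_le_coe_iff.1 htx]

lemma neg_one_div_mul_elog2_zero {n : ℕ} (hn : 0 < n) :
    (((-1 : ℝ) / n : ℝ) : EReal) * elog2 0 = ⊤ := by
  rw [elog2_zero]
  exact EReal.coe_mul_bot_of_neg (div_neg_of_neg_of_pos neg_one_lt_zero (Nat.cast_pos.2 hn))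

theorem exponent_u_symm_general (hP : IsDist P) {Φ : ∀ n : ℕ, (Fin n → Y) → ℝ≥0∞}
    (hΦ : ∀ n, ∑ y, Φ n y ≤ 1) {K : ℕ → ℝ≥0∞}
    (hK : ∀ n Q, IsDist Q → ∀ y, prodDist n Q y ≤ K n * Φ n y) {g : ℕ → ℝ}
    (hg_subexp : Tendsto (fun n : ℕ => Real.logb 2 (g n) / n) atTop (𝓝 0))
    (hg_big : ∀ n, K n < ENNReal.ofReal (g n)) (r : ℝ) :
    (r < renyiMI ⊤ P →
      Tendsto (fun n : ℕ => (((-1 : ℝ) / n : ℝ) : EReal) *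
          elog2 (exceedProb n P (Φ n) (ENNReal.ofReal (g n * 2 ^ (n * r))))) atTop
        (𝓝 (⨆ t : {t : ℝ // 0 ≤ t},
          (t.1 : EReal) * ((r : EReal) - renyiMI (ENNReal.ofReal (1 + t.1)) P)))) ∧
    (renyiMI ⊤ P ≤ r →
      Tendsto (fun n : ℕ => (((-1 : ℝ) / n : ℝ) : EReal) *
          elog2 (exceedProb n P (Φ n) (ENNReal.ofReal (g n * 2 ^ (n * r))))) atTop (𝓝 ⊤)) := by
  have hg0 : ∀ n, 0 < g n := fun n => ENNReal.ofReal_pos.1 (bot_le.trans_lt (hg_big n))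
  have hgap : ∀ n : ℕ, ENNReal.ofReal (2 ^ (n * r)) * K n < ENNReal.ofReal (g n * 2 ^ (n * r)) :=
    fun n => by
      rw [mul_comm (g n), ENNReal.ofReal_mul (by positivity)]
      exact ENNReal.mul_lt_mul_right (ENNReal.ofReal_pos.2 (by positivity)).ne'
        ENNReal.ofReal_ne_top (hg_big n)
  refine ⟨fun hr => ?_, fun hr => ?_⟩
  · exact tendsto_neg_one_div_mul_elog2_exceedProb hP hΦ hK (fun n => (hg0 n).le)
      (fun _ => eventually_le_exp_of_tendsto_logb_div hg0 hg_subexp) (fun n => (hgap n).le) hr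
  · refine tendsto_const_nhds.congr' ?_
    filter_upwards [eventually_gt_atTop 0] with n hn
    rw [exceedProb_eq_zero hP (hK n) (ne_top_of_sum_le_one (hΦ n)) (hgap n) hr,
      neg_one_div_mul_elog2_zero hn]

end Exponent

/-- **Proposition 9 (exponent of a large-deviation probability).**
Let `P_{XY}` be a joint distribution, `Φ_{Y^n}` the uniform mixture over type classes,
and `g` a sub-exponential function with `g(n) > (n+1)^{|Y|}`.  For
`p_n := P_{XY}^{×n}(P_{XY}^{×n} ≥ g(n) 2^{nr} P_X^{×n} × Φ_{Y^n})` one has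
`lim_n (-1/n) log₂ p_n = sup_{t ≥ 0} t (r - I_{1+t}(X:Y))`, the limit being `∞`
when `r ≥ I_∞(X:Y)`. -/
theorem exponent_u_symm
    {X Y : Type*} [Fintype X] [Fintype Y] [DecidableEq Y]
    (P : X × Y → ℝ≥0∞) (hP : IsDist P)
    (g : ℕ → ℝ)
    (hg_subexp : Filter.Tendsto (fun n : ℕ => Real.logb 2 (g n) / n) Filter.atTop (nhds 0))
    (hg_big : ∀ n : ℕ, ((n : ℝ) + 1) ^ (Fintype.card Y) < g n)
    (r : ℝ) :
    ((r : EReal) < renyiMI ⊤ P →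
      Filter.Tendsto
        (fun n : ℕ => (((-1 : ℝ) / n : ℝ) : EReal) * elog2
          (∑ p ∈ Finset.univ.filter
              (fun p : (Fin n → X) × (Fin n → Y) =>
                ENNReal.ofReal (g n * (2 : ℝ) ^ ((n : ℝ) * r)) *
                    (prodDist n (margX P) p.1 * PhiY Y n p.2) ≤ prodJoint n P p),
            prodJoint n P p))
        Filter.atTop
        (nhds (⨆ t : {t : ℝ // 0 ≤ t},
          ((t.1 : ℝ) : EReal) * ((r : EReal) - renyiMI (ENNReal.ofReal (1 + t.1)) P)))) ∧
    (renyiMI ⊤ P ≤ (r : EReal) →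
      Filter.Tendsto
        (fun n : ℕ => (((-1 : ℝ) / n : ℝ) : EReal) * elog2
          (∑ p ∈ Finset.univ.filter
              (fun p : (Fin n → X) × (Fin n → Y) =>
                ENNReal.ofReal (g n * (2 : ℝ) ^ ((n : ℝ) * r)) *
                    (prodDist n (margX P) p.1 * PhiY Y n p.2) ≤ prodJoint n P p),
            prodJoint n P p))
        Filter.atTop (nhds ⊤)) := by
  have hbig : ∀ n : ℕ, ((n : ℝ≥0∞) + 1) ^ Fintype.card Y < ENNReal.ofReal (g n) := fun n => by
    rw [ENNReal.lt_ofReal_iff_toReal_lt (by finiteness), ENNReal.toReal_pow, ← Nat.cast_add_one,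
      ENNReal.toReal_natCast, Nat.cast_add_one]
    exact hg_big n
  exact exponent_u_symm_general hP (sum_PhiY_le_one Y) (fun _ _ hQ => prodDist_le_mul_PhiY hQ)
    hg_subexp hbig r

end RST
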